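/- arXiv:2305.17045 — 7 statements merged into one kernel-verified Lean document; each statement's English description precedes it below -/
import Mathlib

section
/- For any Λ ≥ 1, d > 0 and C₀ > 0 there exists a constant C = C(Λ,d,C₀) such that the following holds for every x̄ ∈ S² and every r̄ ∈ (0,π/2]. Let ρ_{x̄,r̄} be the conformal factor of the Möbius transformation given by the dilation centred at x̄ which maps B_{r̄}(x̄) onto a hemisphere. Then for every x ∈ B_{Λr̄}(x̄), every r ∈ (d·r̄, r̄], and every C¹ function φ : S² → ℝ with support contained in B_r(x) and ‖dφ‖_{L^∞(S²,g_{S²})} ≤ C₀·r⁻¹, one has ‖dφ‖_{L^∞(S², ρ_{x̄,r̄}²g_{S²})} = sup_{S²} ρ_{x̄,r̄}⁻¹·|dφ|_{g_{S²}} ≤ C. -/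
open MeasureTheory Metric Real Set Filter
open scoped RealInnerProductSpace

noncomputable section

abbrev E3 : Type := EuclideanSpace ℝ (Fin 3)

/-- The unit sphere `S² ⊂ ℝ³`. -/
def S2 : Set E3 := Metric.sphere (0 : E3) 1

/-- Surface measure on `S²`: 2-dimensional Hausdorff measure restricted to the sphere. -/
def sphVol : Measure E3 := (μH[2] : Measure E3).restrict S2

/-- The 0-homogeneous extension of a map defined on the sphere. -/
def homExt (u : E3 → E3) : E3 → E3 := fun y => u (‖y‖⁻¹ • y)

def e3 (i : Fin 3) : E3 := EuclideanSpace.single i (1 : ℝ)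

/-- Energy density `|∇u|²` of `u|_{S²}` at `x ∈ S²` (squared Hilbert-Schmidt norm of the
differential, computed via the 0-homogeneous extension). -/
def enDensity (u : E3 → E3) (x : E3) : ℝ :=
  ∑ i, ‖fderiv ℝ (homExt u) x (e3 i)‖ ^ 2

/-- Dirichlet energy `E(u,Ω) = (1/2)∫_Ω |∇u|²`. -/
def energyOn (u : E3 → E3) (Ω : Set E3) : ℝ :=
  (1 / 2) * ∫ x in Ω, enDensity u x ∂sphVol

def energy (u : E3 → E3) : ℝ := energyOn u S2

def det3 (a b c : E3) : ℝ :=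
  a 0 * (b 1 * c 2 - b 2 * c 1) - a 1 * (b 0 * c 2 - b 2 * c 0)
    + a 2 * (b 0 * c 1 - b 1 * c 0)

/-- The signed Jacobian of a sphere map. -/
def jacobian (u : E3 → E3) (x : E3) : ℝ :=
  (1 / 2) * ∑ i, ∑ j, det3 x (e3 i) (e3 j) *
      det3 (u x) (fderiv ℝ (homExt u) x (e3 i)) (fderiv ℝ (homExt u) x (e3 j))

/-- The (Brouwer) degree, `deg u = (1/4π) ∫ Jac(u)`. -/
def sphDeg (u : E3 → E3) : ℝ := (4 * π)⁻¹ * ∫ x, jacobian u x ∂sphVol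

/-- The energy defect `δ_u = E(u) - 4π|deg u|`. -/
def defect (u : E3 → E3) : ℝ := energy u - 4 * π * |sphDeg u|

def IsSphereMap (u : E3 → E3) : Prop :=
  ContDiff ℝ (⊤ : ℕ∞) u ∧ ∀ x ∈ S2, u x ∈ S2

/-- Laplace-Beltrami operator of the round sphere applied to `u`. -/
def sphLap (u : E3 → E3) (x : E3) : E3 :=
  ∑ i, fderiv ℝ (fun y => fderiv ℝ (homExt u) y (e3 i)) x (e3 i)

/-- Tension field `τ(u) = Δu + |∇u|² u`. -/
def tension (u : E3 → E3) (x : E3) : E3 :=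
  sphLap u x + enDensity u x • u x

/-- Harmonic (= rational, up to orientation) maps of the round sphere. -/
def IsHarmonicSphereMap (u : E3 → E3) : Prop :=
  IsSphereMap u ∧ ∀ x ∈ S2, tension u x = 0

/-- Geodesic distance on `S²`. -/
def gdist (x y : E3) : ℝ := Real.arccos ⟪x, y⟫

/-- Geodesic ball in `S²`. -/
def gBall (x : E3) (r : ℝ) : Set E3 := {y ∈ S2 | gdist x y < r}

/-- Oscillation of `u` over `U`. -/
def oscOn (u : E3 → E3) (U : Set E3) : ℝ := ⨆ x ∈ U, ⨆ y ∈ U, ‖u x - u y‖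

/-- The Möbius dilation of the sphere with centre `p` and dilation factor `μ`. -/
def mobius (p : E3) (μ : ℝ) (y : E3) : E3 :=
  ((1 + ⟪y, p⟫) + μ ^ 2 * (1 - ⟪y, p⟫))⁻¹ •
    (((1 + ⟪y, p⟫) - μ ^ 2 * (1 - ⟪y, p⟫)) • p + (2 * μ) • (y - ⟪y, p⟫ • p))

/-- The Möbius dilation `M_{p,r}` centred at `p` scaling `B_r(p)` to a hemisphere. -/
def mobiusDil (p : E3) (r : ℝ) : E3 → E3 := mobius p (Real.tan (r / 2))⁻¹

/-- `ρ_{p,r}² = (1/2)|∇M_{p,r}|²`, the conformal factor squared of `M_{p,r}`. -/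
def confSq (p : E3) (r : ℝ) (x : E3) : ℝ := (1 / 2) * enDensity (mobiusDil p r) x

/-- Möbius transformations (conformal diffeomorphisms) of the round sphere:
compositions of an isometry with a Möbius dilation. -/
def IsMobiusTransform (M : E3 → E3) : Prop :=
  ∃ (R : E3 ≃ₗᵢ[ℝ] E3) (p : E3) (μ : ℝ),
    p ∈ S2 ∧ 0 < μ ∧ ∀ x ∈ S2, M x = R (mobius p μ x)

/-- A set obtained from a geodesic ball by removing a finite collection of smaller balls. -/
def IsBallMinusBalls (Ω : Set E3) : Prop :=
  ∃ (c : E3) (R : ℝ) (m : ℕ) (cs : Fin m → E3) (rs : Fin m → ℝ),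
    c ∈ S2 ∧ 0 < R ∧ (∀ j, cs j ∈ S2 ∧ rs j < R) ∧
    Ω = gBall c R \ ⋃ j, gBall (cs j) (rs j)

/-- `|dφ|²` on the sphere, for a scalar function `φ`, computed via the 0-homogeneous
extension of `φ`. -/
def enDensityR (φ : E3 → ℝ) (x : E3) : ℝ :=
  ∑ i, (fderiv ℝ (fun y => φ (‖y‖⁻¹ • y)) x (e3 i)) ^ 2

lemma aux_sum_ge (A : E3 →L[ℝ] E3) (v : E3) (hv : ‖v‖ = 1) :
    ‖A v‖ ^ 2 ≤ ∑ i, ‖A (e3 i)‖ ^ 2 := by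
  have h1 : v = ∑ i, v i • e3 i := by
    ext j
    fin_cases j <;> simp [e3, Fin.sum_univ_three]
  have h2 : ‖A v‖ ≤ ∑ i, |v i| * ‖A (e3 i)‖ := by
    conv_lhs => rw [h1, map_sum]
    refine (norm_sum_le _ _).trans (le_of_eq ?_)
    refine Finset.sum_congr rfl fun i _ => ?_
    rw [map_smul, norm_smul, Real.norm_eq_abs]
  have h3 : ∑ i, |v i| ^ 2 = 1 := by
    have := EuclideanSpace.norm_sq_eq v
    rw [hv] at this
    simpa using this.symm
  calc ‖A v‖ ^ 2 ≤ (∑ i, |v i| * ‖A (e3 i)‖) ^ 2 := by gcongr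
    _ ≤ (∑ i, |v i| ^ 2) * ∑ i, ‖A (e3 i)‖ ^ 2 := Finset.sum_mul_sq_le_sq_mul_sq _ _ _
    _ = _ := by rw [h3, one_mul]

lemma aux_exists_perp (y p : E3) : ∃ v : E3, ‖v‖ = 1 ∧ ⟪y, v⟫ = 0 ∧ ⟪v, p⟫ = 0 := by
  set W : Submodule ℝ E3 := Submodule.span ℝ {y, p} with hW
  have hlt : Module.finrank ℝ W < 3 := by
    have h := finrank_span_finset_le_card (R := ℝ) (M := E3) ({y, p} : Finset E3)
    have h2 : (({y, p} : Finset E3)).card ≤ 2 := Finset.card_le_two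
    have h3 : W = Submodule.span ℝ ((({y, p} : Finset E3)) : Set E3) := by
      rw [hW, Finset.coe_insert, Finset.coe_singleton]
    rw [Set.finrank, ← h3] at h
    omega
  have hne : Wᗮ ≠ ⊥ := by
    intro h
    have h1 := Submodule.finrank_add_finrank_orthogonal W
    rw [h] at h1
    simp at h1
    omega
  obtain ⟨w, hw, hw0⟩ := Submodule.exists_mem_ne_zero_of_ne_bot hne
  have hy : ⟪y, w⟫ = 0 := (Submodule.mem_orthogonal W w).1 hw y (Submodule.subset_span (by simp))
  have hp : ⟪p, w⟫ = 0 := (Submodule.mem_orthogonal W w).1 hw p (Submodule.subset_span (by simp))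
  refine ⟨‖w‖⁻¹ • w, ?_, ?_, ?_⟩
  · rw [norm_smul, norm_inv, norm_norm, inv_mul_cancel₀ (norm_ne_zero_iff.2 hw0)]
  · rw [inner_smul_right, hy, mul_zero]
  · rw [real_inner_smul_left, real_inner_comm, hp, mul_zero]

lemma aux_S2 {y : E3} : y ∈ S2 ↔ ‖y‖ = 1 := by simp [S2]

lemma aux_deriv (p : E3) (μ : ℝ) (y v : E3) (hy : ‖y‖ = 1) (hv : ‖v‖ = 1)
    (hyv : ⟪y, v⟫ = 0) (hvp : ⟪v, p⟫ = 0)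
    (hD : (1 + ⟪y, p⟫) + μ ^ 2 * (1 - ⟪y, p⟫) ≠ 0) :
    fderiv ℝ (homExt (mobius p μ)) y v =
      ((1 + ⟪y, p⟫) + μ ^ 2 * (1 - ⟪y, p⟫))⁻¹ • (2 * μ) • v := by
  have hy0 : y ≠ 0 := by intro h; simp [h] at hy
  have hM : DifferentiableAt ℝ (mobius p μ) y := by
    unfold mobius
    have h0 : DifferentiableAt ℝ (fun z : E3 => ⟪z, p⟫) y :=
      differentiableAt_id.inner ℝ (differentiableAt_const p)
    have h1 : DifferentiableAt ℝ (fun z : E3 => (1 + ⟪z, p⟫) + μ ^ 2 * (1 - ⟪z, p⟫)) y := by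
      fun_prop
    have h2 : DifferentiableAt ℝ (fun z : E3 =>
        ((1 + ⟪z, p⟫) - μ ^ 2 * (1 - ⟪z, p⟫)) • p + (2 * μ) • (z - ⟪z, p⟫ • p)) y := by
      fun_prop
    exact (h1.inv hD).smul h2
  have hline : HasDerivAt (fun s : ℝ => y + s • v) v 0 := by
    simpa using ((hasDerivAt_id (0 : ℝ)).smul_const v).const_add y
  have hN : DifferentiableAt ℝ (fun z : E3 => ‖z‖⁻¹ • z) y := by
    have h1 : DifferentiableAt ℝ (fun z : E3 => ‖z‖) y := differentiableAt_id.norm ℝ hy0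
    exact (h1.inv (by simpa using hy0)).smul differentiableAt_id
  have hNy : ‖y‖⁻¹ • y = y := by rw [hy]; simp
  have hl0 : y = y + (0 : ℝ) • v := by simp
  have hNv : fderiv ℝ (fun z : E3 => ‖z‖⁻¹ • z) y v = v := by
    have h1 : HasDerivAt (fun s : ℝ => ‖y + s • v‖⁻¹ • (y + s • v))
        (fderiv ℝ (fun z : E3 => ‖z‖⁻¹ • z) y v) 0 := by
      have := hN.hasFDerivAt
      rw [hl0] at this
      have h2 := this.comp_hasDerivAt (0 : ℝ) hline
      rw [← hl0] at h2
      exact h2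
    have hn : ∀ s : ℝ, ‖y + s • v‖ = Real.sqrt (1 + s ^ 2) := by
      intro s
      rw [eq_comm, Real.sqrt_eq_iff_mul_self_eq (by positivity) (norm_nonneg _), ← sq,
        norm_add_sq_real, inner_smul_right, hyv, norm_smul, hy, hv]
      simp
    have h3 : HasDerivAt (fun s : ℝ => (Real.sqrt (1 + s ^ 2))⁻¹) 0 0 := by
      have ha : HasDerivAt (fun s : ℝ => 1 + s ^ 2) 0 0 := by
        simpa using (hasDerivAt_pow 2 (0 : ℝ)).const_add 1
      have hb := (ha.sqrt (by norm_num)).inv (by norm_num)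
      refine HasDerivAt.congr_deriv hb ?_
      simp
    have h4 := h3.smul hline
    simp only [hn] at h1
    have h5 := h1.unique h4
    simpa using h5
  have hMv : fderiv ℝ (mobius p μ) y v =
      ((1 + ⟪y, p⟫) + μ ^ 2 * (1 - ⟪y, p⟫))⁻¹ • (2 * μ) • v := by
    have h1 : HasDerivAt (fun s : ℝ => mobius p μ (y + s • v)) (fderiv ℝ (mobius p μ) y v) 0 := by
      have := hM.hasFDerivAt
      rw [hl0] at this
      have h2 := this.comp_hasDerivAt (0 : ℝ) hline
      rw [← hl0] at h2
      exact h2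
    have hin : ∀ s : ℝ, ⟪y + s • v, p⟫ = ⟪y, p⟫ := by
      intro s
      rw [inner_add_left, real_inner_smul_left, hvp]; simp
    simp only [mobius, hin] at h1
    refine h1.unique ?_
    have ha := ((hline.sub_const (⟪y, p⟫ • p)).const_smul (2 * μ)).const_add
      ((1 + ⟪y, p⟫ - μ ^ 2 * (1 - ⟪y, p⟫)) • p)
    exact ha.const_smul ((1 + ⟪y, p⟫ + μ ^ 2 * (1 - ⟪y, p⟫))⁻¹)
  have hcomp : homExt (mobius p μ) = mobius p μ ∘ (fun z : E3 => ‖z‖⁻¹ • z) := rfl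
  rw [hcomp, fderiv_comp y (by simpa only [hNy] using hM) hN]
  simp only [ContinuousLinearMap.comp_apply, hNy, hNv, hMv]

lemma aux_gdist {x y : E3} (hx : ‖x‖ = 1) (hy : ‖y‖ = 1) :
    gdist x y = InnerProductGeometry.angle x y := by
  simp [gdist, InnerProductGeometry.angle, hx, hy]

lemma aux_supp (φ : E3 → ℝ) (x y : E3) (r : ℝ) (hy : ‖y‖ = 1)
    (hφ : ∀ y ∈ S2, y ∉ gBall x r → φ y = 0) (hr : r < gdist x y) :
    enDensityR φ y = 0 := by
  have hy0 : y ≠ 0 := by intro h; simp [h] at hy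
  have hNy : ‖y‖⁻¹ • y = y := by rw [hy]; simp
  have hcont : ContinuousAt (fun z : E3 => gdist x (‖z‖⁻¹ • z)) y := by
    unfold gdist
    refine Real.continuous_arccos.continuousAt.comp ?_
    have h1 : ContinuousAt (fun z : E3 => ‖z‖⁻¹ • z) y :=
      (continuous_norm.continuousAt.inv₀ (by simpa using hy0)).smul continuousAt_id
    exact continuousAt_const.inner h1
  have hev : ∀ᶠ z in nhds y, r < gdist x (‖z‖⁻¹ • z) := by
    refine hcont.eventually (lt_mem_nhds ?_)
    simpa only [hNy] using hr
  have h0 : (fun z : E3 => φ (‖z‖⁻¹ • z)) =ᶠ[nhds y] fun _ => (0 : ℝ) := by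
    filter_upwards [hev, isOpen_ne.mem_nhds hy0] with z hz hz0
    refine hφ _ ?_ ?_
    · rw [aux_S2, norm_smul, norm_inv, norm_norm, inv_mul_cancel₀ (norm_ne_zero_iff.2 hz0)]
    · intro h
      exact absurd h.2 (not_lt.2 hz.le)
  simp [enDensityR, h0.fderiv_eq]

lemma aux_tan {a : ℝ} (h0 : 0 < a) (h1 : a ≤ π / 4) :
    a ≤ Real.tan a ∧ Real.tan a ≤ 2 * a := by
  have hpi := Real.pi_lt_d2
  refine ⟨Real.le_tan h0.le (by linarith [Real.pi_pos]), ?_⟩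
  have hc : 1 / 2 ≤ Real.cos a := by
    have := Real.one_sub_sq_div_two_le_cos (x := a)
    nlinarith
  rw [Real.tan_eq_sin_div_cos, div_le_iff₀ (by linarith)]
  nlinarith [Real.sin_le h0.le]

lemma aux_conf (Λ : ℝ) (p y : E3) (rb : ℝ) (hp : ‖p‖ = 1) (hy : ‖y‖ = 1)
    (hrb : rb ∈ Set.Ioc 0 (π / 2)) (hd : gdist p y ≤ (Λ + 1) * rb) :
    (rb * (2 + 2 * (Λ + 1) ^ 2))⁻¹ ≤ Real.sqrt (confSq p rb y) := by
  obtain ⟨hr0, hr1⟩ := hrb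
  obtain ⟨hT1, hT2⟩ := aux_tan (a := rb / 2) (by linarith) (by linarith)
  obtain ⟨v, hv, hyv, hvp⟩ := aux_exists_perp y p
  set t : ℝ := ⟪y, p⟫ with ht
  set μ : ℝ := (Real.tan (rb / 2))⁻¹ with hμ
  have hTpos : 0 < Real.tan (rb / 2) := by linarith
  have hμ0 : 0 < μ := inv_pos.2 hTpos
  have hμ1 : rb⁻¹ ≤ μ := inv_anti₀ hTpos (by linarith)
  have hμ2 : μ ≤ 2 * rb⁻¹ := by
    have := inv_anti₀ (by linarith : 0 < rb / 2) hT1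
    rw [inv_div] at this
    rwa [div_eq_mul_inv] at this
  have htabs : |t| ≤ 1 := by
    have := abs_real_inner_le_norm y p
    rwa [hy, hp, one_mul] at this
  obtain ⟨htl, htu⟩ := abs_le.1 htabs
  have ht2 : 1 - t ≤ ((Λ + 1) * rb) ^ 2 / 2 := by
    have h1 := Real.one_sub_sq_div_two_le_cos (x := gdist p y)
    have h2 : Real.cos (gdist p y) = t := by
      rw [gdist, real_inner_comm, Real.cos_arccos htl htu]
    have h3 : 0 ≤ gdist p y := Real.arccos_nonneg _
    have h4 : gdist p y ^ 2 ≤ ((Λ + 1) * rb) ^ 2 := by gcongr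
    linarith
  set D : ℝ := (1 + t) + μ ^ 2 * (1 - t) with hD
  have hDpos : 0 < D := by
    rcases htu.lt_or_eq with h | h
    · have : 0 < μ ^ 2 * (1 - t) := mul_pos (by positivity) (by linarith)
      linarith
    · rw [hD, h]; norm_num
  have hDle : D ≤ 2 + 2 * (Λ + 1) ^ 2 := by
    have h1 : μ ^ 2 * (1 - t) ≤ (2 * rb⁻¹) ^ 2 * (((Λ + 1) * rb) ^ 2 / 2) := by
      have : 0 ≤ 1 - t := by linarith
      gcongr
    have h2 : (2 * rb⁻¹) ^ 2 * (((Λ + 1) * rb) ^ 2 / 2) = 2 * (Λ + 1) ^ 2 := by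
      field_simp
    linarith
  have hden : (D⁻¹ * (2 * μ)) ^ 2 ≤ enDensity (mobiusDil p rb) y := by
    have h1 := aux_sum_ge (fderiv ℝ (homExt (mobiusDil p rb)) y) v hv
    have h2 : fderiv ℝ (homExt (mobiusDil p rb)) y v = D⁻¹ • (2 * μ) • v :=
      aux_deriv p μ y v hy hv hyv hvp hDpos.ne'
    rw [h2, norm_smul, norm_smul, hv, mul_one, ← norm_mul, Real.norm_eq_abs, sq_abs] at h1
    exact h1
  apply Real.le_sqrt_of_sq_le
  unfold confSq
  have hb : (rb * (2 + 2 * (Λ + 1) ^ 2))⁻¹ ≤ D⁻¹ * μ := by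
    rw [mul_inv, mul_comm]
    gcongr
  have hb2 : (rb * (2 + 2 * (Λ + 1) ^ 2))⁻¹ ^ 2 ≤ (D⁻¹ * μ) ^ 2 := by gcongr
  nlinarith [sq_nonneg (D⁻¹ * μ)]

/-- Lemma 2.2 / `lemma:cut offs`: cut-off functions on balls
`B_r(x) ⊆ B_{Λrb}(xb)` with `r ∈ (d rb, rb]` have uniformly bounded differential with respect
to the weighted metric `ρ_{xb,rb}² g_{S²}`. -/
theorem statement6 (Λ : ℝ) (hΛ : 1 ≤ Λ) (d : ℝ) (hd : 0 < d) (C₀ : ℝ) (hC₀ : 0 < C₀) :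
    ∃ C : ℝ, 0 < C ∧
      ∀ (xb : E3) (rb : ℝ), xb ∈ S2 → rb ∈ Set.Ioc 0 (π / 2) →
      ∀ x ∈ gBall xb (Λ * rb), ∀ r ∈ Set.Ioc (d * rb) rb,
      ∀ φ : E3 → ℝ, ContDiff ℝ 1 φ →
        (∀ y ∈ S2, y ∉ gBall x r → φ y = 0) →
        (∀ y ∈ S2, Real.sqrt (enDensityR φ y) ≤ C₀ / r) →
        ∀ y ∈ S2, (Real.sqrt (confSq xb rb y))⁻¹ * Real.sqrt (enDensityR φ y) ≤ C := by
  have hK : 0 < 2 + 2 * (Λ + 1) ^ 2 := by positivity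
  refine ⟨(2 + 2 * (Λ + 1) ^ 2) * (C₀ / d), by positivity, ?_⟩
  intro xb rb hxb hrb x hx r hr φ _ hsupp hbd y hy
  have hr0 : 0 < rb := hrb.1
  by_cases hcase : r < gdist x y
  · rw [aux_supp φ x y r (aux_S2.1 hy) hsupp hcase]
    simp only [Real.sqrt_zero, mul_zero]
    positivity
  have hdist : gdist xb y ≤ (Λ + 1) * rb := by
    have h1 := hx.2
    have h2 := hr.2
    have h3 := InnerProductGeometry.angle_le_angle_add_angle xb x y
    rw [aux_gdist (aux_S2.1 hxb) (aux_S2.1 hx.1)] at h1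
    rw [aux_gdist (aux_S2.1 hx.1) (aux_S2.1 hy)] at hcase
    rw [aux_gdist (aux_S2.1 hxb) (aux_S2.1 hy)]
    linarith
  have hc := aux_conf Λ xb y rb (aux_S2.1 hxb) (aux_S2.1 hy) hrb hdist
  have hc2 : (Real.sqrt (confSq xb rb y))⁻¹ ≤ rb * (2 + 2 * (Λ + 1) ^ 2) := by
    have := inv_anti₀ (by positivity) hc
    rwa [inv_inv] at this
  have hb : Real.sqrt (enDensityR φ y) ≤ C₀ / (d * rb) := by
    refine (hbd y hy).trans ?_
    have := hr.1
    gcongr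
  calc _ ≤ (rb * (2 + 2 * (Λ + 1) ^ 2)) * (C₀ / (d * rb)) := by gcongr
    _ = _ := by field_simp
end
end

section
/- There exist universal constants C < ∞ and K₀ < ∞ such that the following holds for every x̄ ∈ S² and every r̄ ∈ (0,π/2]. Let M : S² → S² be the Möbius transformation given by the dilation centred at x̄ which maps B_{r̄}(x̄) onto a hemisphere, with conformal factors ρ_M = (1/√2)|dM| and ρ_{M⁻¹} = (1/√2)|dM⁻¹|. Then: (i) C⁻¹·r̄⁻¹/(1+(r̄⁻¹·dist_{S²}(x,x̄))²) ≤ ρ_M(x) ≤ C·r̄⁻¹/(1+(r̄⁻¹·dist_{S²}(x,x̄))²) for all x ∈ S², and C⁻¹·r̄⁻¹/(1+(r̄⁻¹·dist_{S²}(y,−x̄))²) ≤ ρ_{M⁻¹}(y) ≤ C·r̄⁻¹/(1+(r̄⁻¹·dist_{S²}(y,−x̄))²) for all y ∈ S²; (ii) sup{ρ_M(x₁)/ρ_M(x₂) : x₁,x₂ ∈ B_{2r̄}(x)} ≤ K₀ for every x ∈ S²; and (iii) C⁻¹·r̄/dist_{S²}(x,x̄) ≤ dist_{S²}(M(x), −x̄)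 ≤ C·r̄/dist_{S²}(x,x̄) for every x ∈ S² with r̄ ≤ dist_{S²}(x,x̄) ≤ π/2. -/
open MeasureTheory Metric Real Set Filter
open scoped RealInnerProductSpace

noncomputable section

lemma S2_norm {x : E3} (hx : x ∈ S2) : ‖x‖ = 1 := by
  simpa [S2] using hx

lemma S2_inner_mem {x p : E3} (hx : x ∈ S2) (hp : p ∈ S2) : -1 ≤ ⟪x, p⟫ ∧ ⟪x, p⟫ ≤ 1 := by
  have h := abs_real_inner_le_norm x p
  rw [S2_norm hx, S2_norm hp] at h
  exact abs_le.mp (by simpa using h)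

lemma den_pos {s μ : ℝ} (hs : -1 ≤ s ∧ s ≤ 1) (hμ : 0 < μ) :
    0 < (1 + s) + μ ^ 2 * (1 - s) := by
  have h2 : 0 < μ ^ 2 := by positivity
  rcases lt_or_ge s 0 with h | h
  · have : 0 < μ ^ 2 * (1 - s) := by apply mul_pos h2; linarith
    linarith [hs.1]
  · have : 0 ≤ μ ^ 2 * (1 - s) := by apply mul_nonneg h2.le; linarith [hs.2]
    linarith

/-- The 0-homogeneous extension of a dilation away from the origin. -/
def gExt (p : E3) (μ : ℝ) (y : E3) : E3 :=
  ((‖y‖ + ⟪y, p⟫) + μ ^ 2 * (‖y‖ - ⟪y, p⟫))⁻¹ •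
    (((‖y‖ + ⟪y, p⟫) - μ ^ 2 * (‖y‖ - ⟪y, p⟫)) • p + (2 * μ) • (y - ⟪y, p⟫ • p))

lemma homExt_eq (p : E3) (μ : ℝ) (y : E3) (hy : y ≠ 0) :
    homExt (mobius p μ) y = gExt p μ y := by
  have hn : ‖y‖ ≠ 0 := by simpa using hy
  unfold homExt mobius gExt
  rw [real_inner_smul_left]
  set a := ⟪y, p⟫
  set n := ‖y‖
  have h1 : (1 + n⁻¹ * a) + μ ^ 2 * (1 - n⁻¹ * a) = n⁻¹ * ((n + a) + μ ^ 2 * (n - a)) := by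
    field_simp
  have h2 : ((1 + n⁻¹ * a) - μ ^ 2 * (1 - n⁻¹ * a)) • p + (2 * μ) • (n⁻¹ • y - (n⁻¹ * a) • p)
      = n⁻¹ • (((n + a) - μ ^ 2 * (n - a)) • p + (2 * μ) • (y - a • p)) := by
    have : (1 + n⁻¹ * a) - μ ^ 2 * (1 - n⁻¹ * a) = n⁻¹ * ((n + a) - μ ^ 2 * (n - a)) := by
      field_simp
    rw [this]
    module
  rw [h1, h2, smul_smul, mul_inv, inv_inv]
  congr 1
  field_simp

lemma hasDerivAt_norm_line {x : E3} (hx : x ∈ S2) (v : E3) :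
    HasDerivAt (fun t : ℝ => ‖x + t • v‖) ⟪x, v⟫ 0 := by
  have hl : HasDerivAt (fun t : ℝ => x + t • v) v 0 := by
    simpa using ((hasDerivAt_id (0 : ℝ)).smul_const v).const_add x
  have h := hl.norm_sq.sqrt (by simp [S2_norm hx])
  have e : (fun t : ℝ => √(‖x + t • v‖ ^ 2)) = fun t : ℝ => ‖x + t • v‖ := by
    funext t; exact Real.sqrt_sq (norm_nonneg _)
  rw [e] at h
  convert h using 1
  simp [S2_norm hx]

lemma fderiv_line {x p : E3} (hx : x ∈ S2) (hp : p ∈ S2) {μ : ℝ} (hμ : 0 < μ) (v : E3) :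
    ‖fderiv ℝ (homExt (mobius p μ)) x v‖ ^ 2 =
      4 * μ ^ 2 / ((1 + ⟪x, p⟫) + μ ^ 2 * (1 - ⟪x, p⟫)) ^ 2 * (‖v‖ ^ 2 - ⟪x, v⟫ ^ 2) := by
  have hx0 : x ≠ 0 := by
    intro h; have := S2_norm hx; simp [h] at this
  have hD := den_pos (S2_inner_mem hx hp) hμ
  have hev : homExt (mobius p μ) =ᶠ[nhds x] gExt p μ := by
    filter_upwards [isOpen_ne.mem_nhds hx0] with y hy using homExt_eq p μ y hy
  rw [hev.fderiv_eq]
  have hdiff : DifferentiableAt ℝ (gExt p μ) x := by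
    have hn : DifferentiableAt ℝ (fun y : E3 => ‖y‖) x := differentiableAt_id.norm ℝ hx0
    unfold gExt
    have hD1 : DifferentiableAt ℝ
        (fun y : E3 => (‖y‖ + ⟪y, p⟫) + μ ^ 2 * (‖y‖ - ⟪y, p⟫)) x := by
      have ha : DifferentiableAt ℝ (fun y : E3 => ⟪y, p⟫) x :=
        differentiableAt_id.inner ℝ (differentiableAt_const p)
      exact (hn.add ha).add ((hn.sub ha).const_mul _)
    have hN1 : DifferentiableAt ℝ
        (fun y : E3 => ((‖y‖ + ⟪y, p⟫) - μ ^ 2 * (‖y‖ - ⟪y, p⟫)) • p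
          + (2 * μ) • (y - ⟪y, p⟫ • p)) x := by
      have ha : DifferentiableAt ℝ (fun y : E3 => ⟪y, p⟫) x :=
        differentiableAt_id.inner ℝ (differentiableAt_const p)
      exact (((hn.add ha).sub ((hn.sub ha).const_mul _)).smul_const p).add
        ((differentiableAt_fun_id.sub (ha.smul_const p)).const_smul (2 * μ))
    refine DifferentiableAt.smul (DifferentiableAt.inv hD1 ?_) hN1
    rw [S2_norm hx]; exact hD.ne'
  have hl : HasDerivAt (fun t : ℝ => x + t • v) v 0 := by
    simpa using ((hasDerivAt_id (0 : ℝ)).smul_const v).const_add x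
  have hn := hasDerivAt_norm_line hx v
  have ha : HasDerivAt (fun t : ℝ => ⟪x + t • v, p⟫) ⟪v, p⟫ 0 := by
    simpa using hl.inner ℝ (hasDerivAt_const (0 : ℝ) p)
  have h1 : HasDerivAt (fun t : ℝ => gExt p μ (x + t • v)) (fderiv ℝ (gExt p μ) x v) 0 := by
    have hd' : HasFDerivAt (gExt p μ) (fderiv ℝ (gExt p μ) x) (x + (0 : ℝ) • v) := by
      simpa using hdiff.hasFDerivAt
    exact hd'.comp_hasDerivAt (0 : ℝ) hl
  have hDd := (hn.add ha).add ((hn.sub ha).const_mul (μ ^ 2))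
  have hNd := (((hn.add ha).sub ((hn.sub ha).const_mul (μ ^ 2))).smul_const p).add
    ((hl.sub (ha.smul_const p)).const_smul (2 * μ))
  have h2 := (hDd.inv (by simpa [S2_norm hx] using hD.ne')).smul hNd
  have h3 := h1.unique h2
  rw [h3]
  simp only [Pi.add_apply, Pi.sub_apply, Pi.smul_apply, Pi.inv_apply, zero_smul,
    add_zero, S2_norm hx]
  have hxx : ⟪x, x⟫ = (1 : ℝ) := by rw [real_inner_self_eq_norm_sq, S2_norm hx]; norm_num
  have hpp : ⟪p, p⟫ = (1 : ℝ) := by rw [real_inner_self_eq_norm_sq, S2_norm hp]; norm_num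
  rw [← real_inner_self_eq_norm_sq v]
  generalize hs : ⟪x, p⟫ = s at *
  generalize hb : ⟪v, p⟫ = b at *
  generalize hc : ⟪x, v⟫ = c at *
  generalize hw : ⟪v, v⟫ = w at *
  have hs' : ⟪p, x⟫ = s := by rw [real_inner_comm]; exact hs
  have hb' : ⟪p, v⟫ = b := by rw [real_inner_comm]; exact hb
  have hc' : ⟪v, x⟫ = c := by rw [real_inner_comm]; exact hc
  generalize hDD : (1 + s) + μ ^ 2 * (1 - s) = D at *
  trans ‖(D⁻¹ * ((c + b) - μ ^ 2 * (c - b) - 2 * μ * b) - (((c + b) + μ ^ 2 * (c - b)) / D ^ 2) *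
      ((1 + s) - μ ^ 2 * (1 - s) - 2 * μ * s)) • p + (2 * μ * D⁻¹) • v
      - (2 * μ * (((c + b) + μ ^ 2 * (c - b)) / D ^ 2)) • x‖ ^ 2
  · congr 2
    module
  rw [← real_inner_self_eq_norm_sq]
  simp only [inner_add_left, inner_add_right, inner_sub_left, inner_sub_right,
    real_inner_smul_left, real_inner_smul_right, hs, hs', hb, hb', hc, hc', hw, hxx, hpp]
  have hD0 := hD.ne'
  field_simp
  subst hDD
  ring

lemma enDensity_mobius {x p : E3} (hx : x ∈ S2) (hp : p ∈ S2) {μ : ℝ} (hμ : 0 < μ) :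
    √((1 / 2) * enDensity (mobius p μ) x) =
      2 * μ / ((1 + ⟪x, p⟫) + μ ^ 2 * (1 - ⟪x, p⟫)) := by
  have hD := den_pos (S2_inner_mem hx hp) hμ
  have hsum : ∑ i : Fin 3, (x i) ^ 2 = 1 := by
    have := EuclideanSpace.norm_sq_eq x
    rw [S2_norm hx] at this
    simpa using this.symm
  have : (1 / 2) * enDensity (mobius p μ) x =
      (2 * μ / ((1 + ⟪x, p⟫) + μ ^ 2 * (1 - ⟪x, p⟫))) ^ 2 := by
    unfold enDensity
    simp_rw [fderiv_line hx hp hμ]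
    rw [← Finset.mul_sum, Finset.sum_sub_distrib]
    have e1 : ∑ i : Fin 3, ‖e3 i‖ ^ 2 = 3 := by simp [e3]
    have e2 : ∑ i : Fin 3, ⟪x, e3 i⟫ ^ 2 = 1 := by
      rw [← hsum]
      simp [e3, EuclideanSpace.inner_single_right]
    rw [e1, e2, div_pow]
    ring
  rw [this, Real.sqrt_sq (by positivity)]

/-- bounds for `t = tan (r/2)`. -/
lemma tan_half_bounds {r : ℝ} (h0 : 0 < r) (h1 : r ≤ π / 2) :
    0 < tan (r / 2) ∧ r / 2 ≤ tan (r / 2) ∧ tan (r / 2) ≤ r ∧ tan (r / 2) ≤ 1 := by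
  have hpi := Real.pi_pos
  have hpi4 := Real.pi_le_four
  have ha : r / 2 < tan (r / 2) := Real.lt_tan (by linarith) (by linarith)
  have hcos : 0 < cos (r / 2) := Real.cos_pos_of_mem_Ioo ⟨by linarith, by linarith⟩
  have hc : 1 / 2 ≤ cos (r / 2) := by
    have h := Real.cos_le_cos_of_nonneg_of_le_pi (x := r / 2) (y := π / 3) (by linarith)
      (by linarith) (by linarith)
    rwa [Real.cos_pi_div_three] at h
  have hsin : sin (r / 2) ≤ r / 2 := Real.sin_le (by linarith)
  refine ⟨by linarith, ha.le, ?_, ?_⟩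
  · rw [Real.tan_eq_sin_div_cos, div_le_iff₀ hcos]
    nlinarith
  · rw [← Real.tan_pi_div_four]
    rcases eq_or_lt_of_le (show r / 2 ≤ π / 4 by linarith) with h | h
    · rw [h]
    · exact (Real.tan_lt_tan_of_lt_of_lt_pi_div_two (by linarith) (by linarith) h).le

/-- the explicit conformal factor is comparable to `r / (r² + θ²)`. -/
lemma factor_bounds {r s : ℝ} (h0 : 0 < r) (h1 : r ≤ π / 2) (hs : -1 ≤ s ∧ s ≤ 1) :
    (32 : ℝ)⁻¹ * (r⁻¹ / (1 + (r⁻¹ * arccos s) ^ 2)) ≤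
      2 * (tan (r / 2))⁻¹ / ((1 + s) + (tan (r / 2))⁻¹ ^ 2 * (1 - s)) ∧
    2 * (tan (r / 2))⁻¹ / ((1 + s) + (tan (r / 2))⁻¹ ^ 2 * (1 - s)) ≤
      32 * (r⁻¹ / (1 + (r⁻¹ * arccos s) ^ 2)) := by
  obtain ⟨ht, ht1, ht2, ht3⟩ := tan_half_bounds h0 h1
  generalize tan (r / 2) = t at *
  have hth0 := Real.arccos_nonneg s
  have hthpi := Real.arccos_le_pi s
  have hcs := Real.cos_arccos hs.1 hs.2
  generalize arccos s = θ at *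
  subst hcs
  have hpi := Real.pi_pos
  have hpi4 := Real.pi_le_four
  have hsinU : sin (θ / 2) ≤ θ / 2 := Real.sin_le (by linarith)
  have hsinL : θ / 4 ≤ sin (θ / 2) := by
    have h := Real.mul_le_sin (x := θ / 2) (by linarith) (by linarith)
    refine le_trans ?_ h
    rw [div_mul_div_comm, div_le_div_iff₀ (by norm_num) (by positivity)]
    nlinarith
  have hcos : cos θ = 1 - 2 * sin (θ / 2) ^ 2 := by
    have := Real.cos_two_mul (θ / 2)
    have h2 := Real.sin_sq_add_cos_sq (θ / 2)
    rw [show 2 * (θ / 2) = θ by ring] at this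
    linarith
  generalize hS : sin (θ / 2) = S at *
  have hS1 : S ≤ 1 := by rw [← hS]; exact Real.sin_le_one _
  have hS0 : 0 ≤ S := by linarith
  have hSS : S ^ 2 ≤ 1 := by nlinarith
  have e1 : r⁻¹ / (1 + (r⁻¹ * θ) ^ 2) = r / (r ^ 2 + θ ^ 2) := by
    field_simp
  have hQ0 : 0 < t ^ 2 * (1 - S ^ 2) + S ^ 2 := by
    have := den_pos hs (inv_pos.mpr ht)
    rw [hcos] at this
    have h := mul_pos this (show 0 < t ^ 2 by positivity)
    field_simp at h
    nlinarith
  have e2 : 2 * t⁻¹ / ((1 + cos θ) + t⁻¹ ^ 2 * (1 - cos θ)) =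
      t / (t ^ 2 * (1 - S ^ 2) + S ^ 2) := by
    have hh : (1 + cos θ) + t⁻¹ ^ 2 * (1 - cos θ) =
        2 * (t ^ 2 * (1 - S ^ 2) + S ^ 2) / t ^ 2 := by
      rw [hcos]; field_simp; ring
    rw [hh]
    field_simp
  rw [e1, e2]
  have hR : 0 < r ^ 2 + θ ^ 2 := by positivity
  have q1 : t ^ 2 ≤ r ^ 2 := by gcongr
  have q2 : S ^ 2 ≤ (θ / 2) ^ 2 := by gcongr
  have q3 : (r / 2) ^ 2 ≤ t ^ 2 := by gcongr
  have q4 : (θ / 4) ^ 2 ≤ S ^ 2 := by gcongr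
  have q5 : t ^ 2 ≤ 1 := by nlinarith
  have q6 : t ^ 2 * S ^ 2 ≤ S ^ 2 := mul_le_of_le_one_left (by positivity) q5
  have q7 : t ^ 2 * S ^ 2 ≤ t ^ 2 := mul_le_of_le_one_right (by positivity) hSS
  have u1 : t ^ 2 * (1 - S ^ 2) + S ^ 2 ≤ r ^ 2 + θ ^ 2 := by nlinarith [sq_nonneg t, sq_nonneg S]
  have u2 : r ^ 2 + θ ^ 2 ≤ 32 * (t ^ 2 * (1 - S ^ 2) + S ^ 2) := by nlinarith
  constructor
  · rw [← div_eq_inv_mul, div_div, div_le_div_iff₀ (by positivity) hQ0]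
    nlinarith [mul_le_mul ht1 u1 hQ0.le ht.le]
  · rw [← mul_div_assoc, div_le_div_iff₀ hQ0 hR]
    nlinarith [mul_le_mul ht2 u2 hR.le h0.le]

lemma gdist_angle {x y : E3} (hx : x ∈ S2) (hy : y ∈ S2) :
    gdist x y = InnerProductGeometry.angle x y := by
  unfold gdist InnerProductGeometry.angle
  rw [S2_norm hx, S2_norm hy]; simp

lemma gdist_comm' (x y : E3) : gdist x y = gdist y x := by
  unfold gdist; rw [real_inner_comm]

lemma gdist_triangle {x y z : E3} (hx : x ∈ S2) (hy : y ∈ S2) (hz : z ∈ S2) :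
    gdist x z ≤ gdist x y + gdist y z := by
  rw [gdist_angle hx hz, gdist_angle hx hy, gdist_angle hy hz]
  exact InnerProductGeometry.angle_le_angle_add_angle x y z

lemma confSq_bounds {p x : E3} (hp : p ∈ S2) (hx : x ∈ S2) {r : ℝ} (h0 : 0 < r)
    (h1 : r ≤ π / 2) :
    (32 : ℝ)⁻¹ * (r⁻¹ / (1 + (r⁻¹ * gdist x p) ^ 2)) ≤ √(confSq p r x) ∧
    √(confSq p r x) ≤ 32 * (r⁻¹ / (1 + (r⁻¹ * gdist x p) ^ 2)) := by
  have ht := (tan_half_bounds h0 h1).1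
  unfold confSq mobiusDil
  rw [enDensity_mobius hx hp (inv_pos.mpr ht)]
  exact factor_bounds h0 h1 (S2_inner_mem hx hp)

lemma inv_bounds {p x : E3} (hp : p ∈ S2) (hx : x ∈ S2) {r : ℝ} (h0 : 0 < r)
    (h1 : r ≤ π / 2) :
    (32 : ℝ)⁻¹ * (r⁻¹ / (1 + (r⁻¹ * gdist x (-p)) ^ 2)) ≤
      √((1 / 2) * enDensity (mobius p (tan (r / 2))) x) ∧
    √((1 / 2) * enDensity (mobius p (tan (r / 2))) x) ≤
      32 * (r⁻¹ / (1 + (r⁻¹ * gdist x (-p)) ^ 2)) := by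
  have ht := (tan_half_bounds h0 h1).1
  have hs := S2_inner_mem hx hp
  rw [enDensity_mobius hx hp ht]
  have h := factor_bounds (s := -⟪x, p⟫) h0 h1 ⟨by linarith, by linarith⟩
  unfold gdist
  rw [inner_neg_right]
  have hD := den_pos hs ht
  have e : 2 * (tan (r / 2))⁻¹ / ((1 + -⟪x, p⟫) + (tan (r / 2))⁻¹ ^ 2 * (1 - -⟪x, p⟫)) =
      2 * tan (r / 2) / ((1 + ⟪x, p⟫) + tan (r / 2) ^ 2 * (1 - ⟪x, p⟫)) := by
    generalize tan (r / 2) = t at *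
    have hh : (1 + -⟪x, p⟫) + t⁻¹ ^ 2 * (1 - -⟪x, p⟫) =
        ((1 + ⟪x, p⟫) + t ^ 2 * (1 - ⟪x, p⟫)) / t ^ 2 := by
      field_simp; ring
    rw [hh]
    field_simp
  rwa [e] at h

lemma inner_mobius {p x : E3} (hp : p ∈ S2) (μ : ℝ) :
    ⟪mobius p μ x, -p⟫ = ((1 + ⟪x, p⟫) + μ ^ 2 * (1 - ⟪x, p⟫))⁻¹ *
      (μ ^ 2 * (1 - ⟪x, p⟫) - (1 + ⟪x, p⟫)) := by
  have hpp : ⟪p, p⟫ = (1 : ℝ) := by rw [real_inner_self_eq_norm_sq, S2_norm hp]; norm_num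
  unfold mobius
  simp only [inner_neg_right, inner_add_left, inner_sub_left, real_inner_smul_left, hpp]
  ring

lemma part3 {p x : E3} (hp : p ∈ S2) (hx : x ∈ S2) {r : ℝ} (h0 : 0 < r)
    (h1 : r ≤ π / 2) (h2 : r ≤ gdist x p) (h3 : gdist x p ≤ π / 2) :
    (32 : ℝ)⁻¹ * (r / gdist x p) ≤ gdist (mobiusDil p r x) (-p) ∧
      gdist (mobiusDil p r x) (-p) ≤ 32 * (r / gdist x p) := by
  obtain ⟨ht, ht1, ht2, ht3⟩ := tan_half_bounds h0 h1
  have hs := S2_inner_mem hx hp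
  have hcs := Real.cos_arccos hs.1 hs.2
  have hgd : gdist (mobiusDil p r x) (-p) = arccos ⟪mobiusDil p r x, -p⟫ := rfl
  rw [hgd]
  unfold mobiusDil
  rw [inner_mobius hp]
  change cos (gdist x p) = _ at hcs
  rw [← hcs]
  generalize gdist x p = θ at *
  have hθ : 0 < θ := by linarith
  obtain ⟨hT, hT1, hT2, hT3⟩ := tan_half_bounds hθ h3
  have htT : tan (r / 2) ≤ tan (θ / 2) := by
    rcases eq_or_lt_of_le h2 with h | h
    · rw [h]
    · exact (Real.tan_lt_tan_of_lt_of_lt_pi_div_two (by linarith) (by linarith)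
        (by linarith)).le
  have hcosθ : cos θ = (1 - tan (θ / 2) ^ 2) / (1 + tan (θ / 2) ^ 2) := by
    have hc : 0 < cos (θ / 2) := Real.cos_pos_of_mem_Ioo ⟨by linarith, by linarith⟩
    have h := Real.cos_two_mul (θ / 2)
    have h' := Real.sin_sq_add_cos_sq (θ / 2)
    rw [show 2 * (θ / 2) = θ by ring] at h
    rw [h, Real.tan_eq_sin_div_cos, eq_div_iff (by positivity)]
    field_simp
    have : sin (θ / 2) ^ 2 = 1 - cos (θ / 2) ^ 2 := by linarith
    rw [this]; ring
  rw [hcosθ]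
  generalize tan (r / 2) = t at *
  generalize tan (θ / 2) = T at *
  have hu0 : 0 < t / T := by positivity
  have hu1 : t / T ≤ 1 := by rw [div_le_one hT]; exact htT
  have hcosA : cos (2 * arctan (t / T)) = (1 - (t / T) ^ 2) / (1 + (t / T) ^ 2) := by
    rw [Real.cos_two_mul, Real.cos_sq_arctan]
    field_simp
    ring
  have hval : ((1 + (1 - T ^ 2) / (1 + T ^ 2)) + t⁻¹ ^ 2 * (1 - (1 - T ^ 2) / (1 + T ^ 2)))⁻¹ *
      (t⁻¹ ^ 2 * (1 - (1 - T ^ 2) / (1 + T ^ 2)) - (1 + (1 - T ^ 2) / (1 + T ^ 2))) =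
      cos (2 * arctan (t / T)) := by
    rw [hcosA]
    have a1 : 1 + (1 - T ^ 2) / (1 + T ^ 2) = 2 / (1 + T ^ 2) := by field_simp; ring
    have a2 : 1 - (1 - T ^ 2) / (1 + T ^ 2) = 2 * T ^ 2 / (1 + T ^ 2) := by field_simp; ring
    rw [a1, a2]
    field_simp
    ring
  have hA0 : 0 < arctan (t / T) := Real.arctan_pos.mpr hu0
  have hA1 : arctan (t / T) < π / 2 := Real.arctan_lt_pi_div_two _
  rw [hval, Real.arccos_cos (by linarith) (by linarith)]
  have hup : arctan (t / T) ≤ t / T := by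
    have := Real.lt_tan hA0 hA1
    rw [Real.tan_arctan] at this
    exact this.le
  have hlow : t / T ≤ 2 * arctan (t / T) := by
    have h := Real.sin_le (x := 2 * arctan (t / T)) (by linarith)
    refine le_trans ?_ h
    have hc : 0 < cos (arctan (t / T)) := Real.cos_arctan_pos _
    have e : sin (2 * arctan (t / T)) = 2 * (t / T) / (1 + (t / T) ^ 2) := by
      have e1 : sin (2 * arctan (t / T)) =
          2 * tan (arctan (t / T)) * cos (arctan (t / T)) ^ 2 := by
        rw [Real.sin_two_mul, Real.tan_eq_sin_div_cos]; field_simp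
      rw [e1, Real.tan_arctan, Real.cos_sq_arctan]
      field_simp
    rw [e, le_div_iff₀ (by positivity)]
    nlinarith [mul_pos hu0 hu0]
  have b1 : t / T ≤ 2 * (r / θ) := by
    rw [← mul_div_assoc, div_le_div_iff₀ hT hθ]
    nlinarith [mul_le_mul ht2 hT1 (by positivity) h0.le]
  have b2 : r / θ ≤ 2 * (t / T) := by
    rw [← mul_div_assoc, div_le_div_iff₀ hθ hT]
    nlinarith [mul_le_mul ht1 hT2 hT.le ht.le]
  have b3 : 0 < r / θ := by positivity
  constructor <;> nlinarith

lemma part2 {p x x₁ x₂ : E3} (hp : p ∈ S2) (hx : x ∈ S2) {r : ℝ} (h0 : 0 < r)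
    (h1 : r ≤ π / 2) (hx₁ : x₁ ∈ gBall x (2 * r)) (hx₂ : x₂ ∈ gBall x (2 * r)) :
    √(confSq p r x₁) ≤ (33 * 32 * 32) * √(confSq p r x₂) := by
  obtain ⟨hs1, hd1⟩ := hx₁
  obtain ⟨hs2, hd2⟩ := hx₂
  have hu := (confSq_bounds hp hs1 h0 h1).2
  have hl := (confSq_bounds hp hs2 h0 h1).1
  have t1 := gdist_triangle hs2 hx hp
  have t2 := gdist_triangle hx hs1 hp
  rw [gdist_comm' x₂ x] at t1
  have n1 : 0 ≤ gdist x₁ p := Real.arccos_nonneg _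
  have n2 : 0 ≤ gdist x₂ p := Real.arccos_nonneg _
  have hd : gdist x₂ p ≤ gdist x₁ p + 4 * r := by linarith
  generalize gdist x₁ p = a at *
  generalize gdist x₂ p = b at *
  have e1 : r⁻¹ / (1 + (r⁻¹ * a) ^ 2) = r / (r ^ 2 + a ^ 2) := by field_simp
  have e2 : r⁻¹ / (1 + (r⁻¹ * b) ^ 2) = r / (r ^ 2 + b ^ 2) := by field_simp
  rw [e1] at hu
  rw [e2] at hl
  have key : r / (r ^ 2 + a ^ 2) ≤ 33 * (r / (r ^ 2 + b ^ 2)) := by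
    rw [← mul_div_assoc, div_le_div_iff₀ (by positivity) (by positivity)]
    have hb : b ^ 2 ≤ (a + 4 * r) ^ 2 := by gcongr
    have : r ^ 2 + b ^ 2 ≤ 33 * (r ^ 2 + a ^ 2) := by nlinarith [sq_nonneg (a - 4 * r)]
    nlinarith
  linarith

/-- Lemma A.1 / `lemma:dilation`: basic properties of the conformal
factors of Möbius dilations `M = M_{x̄,r̄}` and their inverses `M⁻¹ = M_{x̄, ·}` (which is
the dilation with the reciprocal factor). -/
theorem statement11 :
    ∃ C K₀ : ℝ, 0 < C ∧ 0 < K₀ ∧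
      ∀ (xb : E3) (rb : ℝ), xb ∈ S2 → rb ∈ Set.Ioc 0 (π / 2) →
        -- (i) for ρ_M
        (∀ x ∈ S2,
          C⁻¹ * (rb⁻¹ / (1 + (rb⁻¹ * gdist x xb) ^ 2)) ≤ Real.sqrt (confSq xb rb x) ∧
          Real.sqrt (confSq xb rb x) ≤ C * (rb⁻¹ / (1 + (rb⁻¹ * gdist x xb) ^ 2))) ∧
        -- (i) for ρ_{M⁻¹}; `M⁻¹` is the dilation at `xb` with factor `tan(r̄/2)`
        (∀ y ∈ S2,
          C⁻¹ * (rb⁻¹ / (1 + (rb⁻¹ * gdist y (-xb)) ^ 2))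
              ≤ Real.sqrt ((1 / 2) * enDensity (mobius xb (Real.tan (rb / 2))) y) ∧
          Real.sqrt ((1 / 2) * enDensity (mobius xb (Real.tan (rb / 2))) y)
              ≤ C * (rb⁻¹ / (1 + (rb⁻¹ * gdist y (-xb)) ^ 2))) ∧
        -- (ii) uniform comparability of ρ_M on balls of radius 2r̄
        (∀ x ∈ S2, ∀ x₁ ∈ gBall x (2 * rb), ∀ x₂ ∈ gBall x (2 * rb),
          Real.sqrt (confSq xb rb x₁) ≤ K₀ * Real.sqrt (confSq xb rb x₂)) ∧
        -- (iii) distance of images from the antipodal point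
        (∀ x ∈ S2, rb ≤ gdist x xb → gdist x xb ≤ π / 2 →
          C⁻¹ * (rb / gdist x xb) ≤ gdist (mobiusDil xb rb x) (-xb) ∧
          gdist (mobiusDil xb rb x) (-xb) ≤ C * (rb / gdist x xb)) := by
  refine ⟨32, 33 * 32 * 32, by norm_num, by norm_num, ?_⟩
  intro xb rb hxb hrb
  refine ⟨fun x hx => confSq_bounds hxb hx hrb.1 hrb.2, fun y hy => inv_bounds hxb hy hrb.1 hrb.2,
    fun x hx x₁ h₁ x₂ h₂ => part2 hxb hx hrb.1 hrb.2 h₁ h₂,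
    fun x hx h1 h2 => part3 hxb hx hrb.1 hrb.2 h1 h2⟩
end
end

section
/- For every n ∈ ℕ, α ≥ 1 and A ≥ 1 there exists a constant C = C(n,α,A) such that the following holds. Let v ∈ H¹(S²,S²) and let ω₁,…,ω_n : S² → S² be harmonic maps (i.e. −Δ_{g_{S²}}ωᵢ = |∇ωᵢ|²ωᵢ) with E(v) = ∑ᵢ E(ωᵢ) + δ for some δ ∈ (0,1/2). Suppose {Ωᵢ}_{i=1}^n is a measurable partition of S², that E(v) ≤ A and E(ωᵢ) ≤ A for all i, and that ∫_{S²} |∇ωᵢ|²·|v−ωᵢ|² dv_{g_{S²}} ≤ A·δ·(1+|log δ|) and ∫_{S²∖Ωᵢ} |∇ωᵢ|² dv_{g_{S²}} ≤ A·δ^{2α} for every i. Then ∑_{i=1}^n ∫_{Ωᵢ} |∇(v−ωᵢ)|² dv_{g_{S²}} ≤ C·δ·(1+|log δ|). -/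
open MeasureTheory Metric Real Set Filter
open scoped RealInnerProductSpace

noncomputable section

lemma sphPara_contDiff :
    ContDiff ℝ 1 (fun p : Fin 2 → ℝ =>
      (!₂[Real.sin (p 0) * Real.cos (p 1), Real.sin (p 0) * Real.sin (p 1), Real.cos (p 0)] : E3)) := by
  rw [contDiff_euclidean]
  intro i
  fin_cases i <;> simp <;> fun_prop

lemma S2_subset_image : S2 ⊆ (fun p : Fin 2 → ℝ =>
      (!₂[Real.sin (p 0) * Real.cos (p 1), Real.sin (p 0) * Real.sin (p 1), Real.cos (p 0)] : E3)) ''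
      (Set.Icc (fun _ => -π) (fun _ => π)) := by
  intro x hx
  have hx1 : x 0 ^ 2 + x 1 ^ 2 + x 2 ^ 2 = 1 := by
    have : ‖x‖ = 1 := by simpa [S2] using hx
    have h2 := EuclideanSpace.real_norm_sq_eq x
    rw [this, Fin.sum_univ_three] at h2
    linarith
  have hz1 : -1 ≤ x 2 := by nlinarith [sq_nonneg (x 0), sq_nonneg (x 1)]
  have hz2 : x 2 ≤ 1 := by nlinarith [sq_nonneg (x 0), sq_nonneg (x 1)]
  have hs : Real.sin (Real.arccos (x 2)) = ‖(⟨x 0, x 1⟩ : ℂ)‖ := by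
    rw [Real.sin_arccos, Complex.norm_def, Complex.normSq_mk]
    congr 1
    linarith
  refine ⟨![Real.arccos (x 2), Complex.arg ⟨x 0, x 1⟩], ?_, ?_⟩
  · constructor
    · intro i
      fin_cases i
      · simpa using (by linarith [Real.arccos_nonneg (x 2), Real.pi_pos] : -π ≤ Real.arccos (x 2))
      · simpa using (Complex.neg_pi_lt_arg _).le
    · intro i
      fin_cases i
      · simpa using Real.arccos_le_pi _
      · simpa using Complex.arg_le_pi _
  · ext i
    fin_cases i
    · simp [hs, Complex.norm_mul_cos_arg]
    · simp [hs, Complex.norm_mul_sin_arg]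
    · simp [Real.cos_arccos hz1 hz2]

lemma hausdorff_S2_lt_top : (μH[2] : Measure E3) S2 < ⊤ := by
  refine lt_of_le_of_lt (measure_mono S2_subset_image) ?_
  have hc : IsCompact (Set.Icc (fun _ => -π) (fun _ => π) : Set (Fin 2 → ℝ)) := isCompact_Icc
  obtain ⟨K, hK⟩ := LocallyLipschitzOn.exists_lipschitzOnWith_of_compact hc
    (sphPara_contDiff.locallyLipschitz.locallyLipschitzOn (s := Set.Icc (fun _ => -π) (fun _ => π)))
  refine lt_of_le_of_lt (hK.hausdorffMeasure_image_le (by norm_num)) ?_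
  have : (μH[2] : Measure (Fin 2 → ℝ)) = volume := by
    have := hausdorffMeasure_pi_real (ι := Fin 2)
    simpa using this
  rw [this]
  exact ENNReal.mul_lt_top (ENNReal.rpow_lt_top_of_nonneg (by norm_num) (by simp)) hc.measure_lt_top

instance sphVol_finite : IsFiniteMeasure sphVol := by
  constructor
  simpa [sphVol] using hausdorff_S2_lt_top

lemma isCompact_S2 : IsCompact S2 := isCompact_sphere _ _

lemma measurable_S2 : MeasurableSet S2 := isCompact_S2.measurableSet

lemma ae_mem_S2 : ∀ᵐ x ∂sphVol, x ∈ S2 := ae_restrict_mem measurable_S2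

lemma sphVol_integrable {g : E3 → ℝ} (hg : ContinuousOn g S2) : Integrable g sphVol := by
  obtain ⟨C, hC⟩ := isCompact_S2.exists_bound_of_continuousOn hg
  refine Integrable.of_bound (hg.aestronglyMeasurable measurable_S2) C ?_
  filter_upwards [ae_mem_S2] with x hx using hC x hx

lemma S2_ne_zero {x : E3} (hx : x ∈ S2) : x ≠ 0 := by
  rintro rfl
  simp [S2] at hx

/-- Rotation invariance. -/
lemma sphVol_rot (R : E3 ≃ₗᵢ[ℝ] E3) (g : E3 → ℝ) : ∫ x, g (R x) ∂sphVol = ∫ x, g x ∂sphVol := by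
  have h := R.toIsometryEquiv.measurePreserving_hausdorffMeasure 2
  have hpre : R.toIsometryEquiv ⁻¹' S2 = S2 := by
    ext x
    simp [S2]
  have h2 := h.setIntegral_preimage_emb R.toHomeomorph.measurableEmbedding g S2
  rw [hpre] at h2
  exact h2

/-- The generator of the rotation in the `i,j` plane. -/
def rotJ (i j : Fin 3) : E3 →L[ℝ] E3 :=
  (EuclideanSpace.proj i : E3 →L[ℝ] ℝ).smulRight (e3 j)
    - (EuclideanSpace.proj j : E3 →L[ℝ] ℝ).smulRight (e3 i)

lemma rotJ_apply (i j : Fin 3) (x : E3) : rotJ i j x = x i • e3 j - x j • e3 i := by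
  simp [rotJ]

lemma rotJ_skew (i j : Fin 3) : rotJ i j ∈ skewAdjoint (E3 →L[ℝ] E3) := by
  rw [skewAdjoint.mem_iff, ContinuousLinearMap.star_eq_adjoint, eq_comm,
    ContinuousLinearMap.eq_adjoint_iff]
  intro x y
  simp [rotJ_apply, e3, inner_sub_left, inner_sub_right, inner_smul_left, inner_smul_right,
    EuclideanSpace.inner_single_left, EuclideanSpace.inner_single_right]
  ring

/-- The integral of a rotational derivative over the sphere vanishes. -/
lemma integral_rot_deriv (J : E3 →L[ℝ] E3) (hJ : J ∈ skewAdjoint (E3 →L[ℝ] E3)) (h : E3 → ℝ)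
    (hh : ContDiffOn ℝ 1 h {0}ᶜ) : ∫ x, fderiv ℝ h x (J x) ∂sphVol = 0 := by
  have hopen : IsOpen ({0}ᶜ : Set E3) := isOpen_compl_singleton
  have hU : ∀ t : ℝ, NormedSpace.exp (t • J) ∈ unitary (E3 →L[ℝ] E3) := fun t =>
    let +nondep : NormedAlgebra ℚ (E3 →L[ℝ] E3) := .restrictScalars ℚ ℝ _
    NormedSpace.exp_mem_unitary_of_mem_skewAdjoint (skewAdjoint.smul_mem t hJ)
  let R : ℝ → E3 ≃ₗᵢ[ℝ] E3 := fun t => Unitary.linearIsometryEquiv ⟨_, hU t⟩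
  have hR : ∀ t x, R t x = NormedSpace.exp (t • J) x := fun t x => rfl
  have hS : ∀ t x, x ∈ S2 → R t x ∈ S2 := by
    intro t x hx
    simpa [S2] using hx
  have hd : ∀ x t, HasDerivAt (fun t => R t x) (J (R t x)) t := by
    intro x t
    have := hasDerivAt_exp_smul_const' (𝕂 := ℝ) J t
    exact ((ContinuousLinearMap.apply ℝ E3 x).hasFDerivAt (x := NormedSpace.exp (t • J))).comp_hasDerivAt t this
  have hR0 : ∀ x, R 0 x = x := by
    intro x
    have h0 : (0:ℝ) • J = 0 := zero_smul ℝ J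
    rw [hR, h0, NormedSpace.exp_zero]
    rfl
  have hfc : ContinuousOn (fun x => fderiv ℝ h x (J x)) S2 := by
    have := (hh.continuousOn_fderiv_of_isOpen hopen le_rfl).mono
      (fun x (hx : x ∈ S2) => S2_ne_zero hx)
    exact this.clm_apply J.continuous.continuousOn
  have hcont : ContinuousOn h S2 := hh.continuousOn.mono (fun x (hx : x ∈ S2) => S2_ne_zero hx)
  obtain ⟨C, hC⟩ := isCompact_S2.exists_bound_of_continuousOn hfc
  have key := hasDerivAt_integral_of_dominated_loc_of_deriv_le (μ := sphVol)
    (F := fun t x => h (R t x)) (F' := fun t x => fderiv ℝ h (R t x) (J (R t x)))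
    (x₀ := (0:ℝ)) (s := Set.univ) (bound := fun _ => C) univ_mem ?_ ?_ ?_ ?_ (integrable_const _) ?_
  · have h1 := key.2
    have h2 : (fun t => ∫ x, h (R t x) ∂sphVol) = fun _ => ∫ x, h x ∂sphVol := by
      funext t
      exact sphVol_rot (R t) h
    rw [h2] at h1
    have h3 := h1.unique (hasDerivAt_const _ _)
    simpa only [hR0] using h3
  · refine Eventually.of_forall fun t => ?_
    exact (sphVol_integrable (hcont.comp (R t).continuous.continuousOn
      (fun x hx => hS t x hx))).aestronglyMeasurable
  · exact sphVol_integrable (hcont.comp (R 0).continuous.continuousOn (fun x hx => hS 0 x hx))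
  · exact (sphVol_integrable (hfc.comp (R 0).continuous.continuousOn
      (fun x hx => hS 0 x hx))).aestronglyMeasurable
  · filter_upwards [ae_mem_S2] with x hx t _ using hC _ (hS t x hx)
  · filter_upwards [ae_mem_S2] with x hx t _
    have hne := S2_ne_zero (hS t x hx)
    have := ((hh.differentiableOn one_ne_zero).differentiableAt (hopen.mem_nhds hne)).hasFDerivAt
    exact this.comp_hasDerivAt t (hd x t)

lemma S2_sq {x : E3} (hx : x ∈ S2) : x 0 ^ 2 + x 1 ^ 2 + x 2 ^ 2 = 1 := by
  have h2 := EuclideanSpace.real_norm_sq_eq x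
  rw [S2_norm hx, Fin.sum_univ_three] at h2
  linarith

lemma homExt_eq_s12 {u : E3 → E3} {x : E3} (hx : x ∈ S2) : homExt u x = u x := by
  simp [homExt, S2_norm hx]

lemma homExt_contDiffOn {u : E3 → E3} (hu : ContDiff ℝ (⊤ : ℕ∞) u) :
    ContDiffOn ℝ (⊤ : ℕ∞) (homExt u) {0}ᶜ := by
  intro x hx
  have hx : x ≠ 0 := hx
  apply ContDiffAt.contDiffWithinAt
  have h1 : ContDiffAt ℝ (⊤ : ℕ∞) (fun y : E3 => ‖y‖⁻¹ • y) x :=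
    ((contDiffAt_norm ℝ hx).inv (norm_ne_zero_iff.2 hx)).smul contDiffAt_id
  exact hu.contDiffAt.comp x h1

lemma homExt_fderiv_contDiffOn {u : E3 → E3} (hu : ContDiff ℝ (⊤ : ℕ∞) u) :
    ContDiffOn ℝ 1 (fderiv ℝ (homExt u)) {0}ᶜ :=
  (homExt_contDiffOn hu).fderiv_of_isOpen isOpen_compl_singleton (by
    rw [one_add_one_eq_two]
    exact WithTop.coe_le_coe.2 (le_top : (2 : ℕ∞) ≤ ⊤))

lemma homExt_diff {u : E3 → E3} (hu : ContDiff ℝ (⊤ : ℕ∞) u) {x : E3} (hx : x ≠ 0) :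
    DifferentiableAt ℝ (homExt u) x :=
  ((homExt_contDiffOn hu).differentiableOn (by simp)).differentiableAt
    (isOpen_compl_singleton.mem_nhds hx)

lemma homExt_fderiv_diff {u : E3 → E3} (hu : ContDiff ℝ (⊤ : ℕ∞) u) {x : E3} (hx : x ≠ 0) :
    DifferentiableAt ℝ (fderiv ℝ (homExt u)) x :=
  ((homExt_fderiv_contDiffOn hu).differentiableOn (by simp)).differentiableAt
    (isOpen_compl_singleton.mem_nhds hx)

/-- Euler relation. -/
lemma homExt_euler {u : E3 → E3} (hu : ContDiff ℝ (⊤ : ℕ∞) u) {x : E3} (hx : x ≠ 0) :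
    fderiv ℝ (homExt u) x x = 0 := by
  have h0 : HasDerivAt (fun t : ℝ => t • x) x 1 := by
    simpa using (hasDerivAt_id (1:ℝ)).smul_const x
  have h1 : HasDerivAt (fun t : ℝ => homExt u (t • x)) (fderiv ℝ (homExt u) x x) 1 := by
    have hf : HasFDerivAt (homExt u) (fderiv ℝ (homExt u) x) ((1:ℝ) • x) := by
      rw [one_smul]
      exact (homExt_diff hu hx).hasFDerivAt
    exact HasFDerivAt.comp_hasDerivAt (l := homExt u) (f := fun t : ℝ => t • x) (1:ℝ) hf h0
  have h2 : (fun t : ℝ => homExt u (t • x)) =ᶠ[nhds 1] fun _ => homExt u x := by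
    filter_upwards [lt_mem_nhds (zero_lt_one' ℝ)] with t ht
    simp only [homExt]
    congr 1
    rw [norm_smul, Real.norm_of_nonneg ht.le, smul_smul]
    congr 1
    field_simp
  exact h1.unique ((hasDerivAt_const (1:ℝ) (homExt u x)).congr_of_eventuallyEq h2)

lemma homExt_euler2 {u : E3 → E3} (hu : ContDiff ℝ (⊤ : ℕ∞) u) {x : E3} (hx : x ≠ 0) :
    fderiv ℝ (fderiv ℝ (homExt u)) x x x = 0 := by
  have h1 : HasFDerivAt (fun y => fderiv ℝ (homExt u) y y) _ x :=
    (homExt_fderiv_diff hu hx).hasFDerivAt.clm_apply (hasFDerivAt_id x)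
  have h2 : (fun y => fderiv ℝ (homExt u) y y) =ᶠ[nhds x] fun _ => 0 := by
    filter_upwards [isOpen_compl_singleton.mem_nhds hx] with y hy
    exact homExt_euler hu hy
  have h3 := h1.unique ((hasFDerivAt_const (0:E3) x).congr_of_eventuallyEq h2)
  have h4 := congrArg (fun L => L x) h3
  simpa [homExt_euler hu hx] using h4

lemma e3_coord (i j : Fin 3) : (e3 i) j = if j = i then 1 else 0 := by
  simp [e3, PiLp.single_apply]

lemma vec_eq_sum (x : E3) : x = x 0 • e3 0 + x 1 • e3 1 + x 2 • e3 2 := by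
  ext i
  fin_cases i <;> simp [e3]

/-- Cross term of the energy densities. -/
def crossD (u w : E3 → E3) (x : E3) : ℝ :=
  ∑ i, ⟪fderiv ℝ (homExt u) x (e3 i), fderiv ℝ (homExt w) x (e3 i)⟫

lemma sum_inner_rot (D D₂ : E3 →L[ℝ] E3) {x : E3} (hx : x ∈ S2) (hD : D x = 0) :
    ⟪D (rotJ 0 1 x), D₂ (rotJ 0 1 x)⟫ + ⟪D (rotJ 0 2 x), D₂ (rotJ 0 2 x)⟫
      + ⟪D (rotJ 1 2 x), D₂ (rotJ 1 2 x)⟫ = ∑ i, ⟪D (e3 i), D₂ (e3 i)⟫ := by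
  have h : ∀ j, x 0 * ⟪D (e3 0), D₂ (e3 j)⟫ + x 1 * ⟪D (e3 1), D₂ (e3 j)⟫
      + x 2 * ⟪D (e3 2), D₂ (e3 j)⟫ = 0 := by
    intro j
    have h1 : ⟪D x, D₂ (e3 j)⟫ = 0 := by rw [hD, inner_zero_left]
    rw [vec_eq_sum x] at h1
    simpa [inner_add_left, inner_smul_left, -map_smul, map_smul] using h1
  have hs := S2_sq hx
  have h0 := h 0
  have h1 := h 1
  have h2 := h 2
  rw [Fin.sum_univ_three]
  simp only [rotJ_apply, map_sub, map_smul, inner_sub_left, inner_sub_right, real_inner_smul_left,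
    real_inner_smul_right]
  linear_combination (⟪D (e3 0), D₂ (e3 0)⟫ + ⟪D (e3 1), D₂ (e3 1)⟫ + ⟪D (e3 2), D₂ (e3 2)⟫) * hs
    - x 0 * h0 - x 1 * h1 - x 2 * h2

lemma sum_lap_rot (D : E3 →L[ℝ] E3) (B : E3 →L[ℝ] E3 →L[ℝ] E3) {x : E3} (hx : x ∈ S2)
    (hD : D x = 0) (hB : B x x = 0) :
    (B (rotJ 0 1 x) (rotJ 0 1 x) + D (rotJ 0 1 (rotJ 0 1 x)))
      + (B (rotJ 0 2 x) (rotJ 0 2 x) + D (rotJ 0 2 (rotJ 0 2 x)))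
      + (B (rotJ 1 2 x) (rotJ 1 2 x) + D (rotJ 1 2 (rotJ 1 2 x))) = ∑ i, B (e3 i) (e3 i) := by
  have hs := S2_sq hx
  have hDsum : x 0 • D (e3 0) + x 1 • D (e3 1) + x 2 • D (e3 2) = 0 := by
    rw [← map_smul, ← map_smul, ← map_smul, ← map_add, ← map_add, ← vec_eq_sum, hD]
  have hBsum : x 0 • (x 0 • B (e3 0) (e3 0) + x 1 • B (e3 0) (e3 1) + x 2 • B (e3 0) (e3 2))
    + x 1 • (x 0 • B (e3 1) (e3 0) + x 1 • B (e3 1) (e3 1) + x 2 • B (e3 1) (e3 2))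
    + x 2 • (x 0 • B (e3 2) (e3 0) + x 1 • B (e3 2) (e3 1) + x 2 • B (e3 2) (e3 2)) = 0 := by
    have h1 : B (x 0 • e3 0 + x 1 • e3 1 + x 2 • e3 2) (x 0 • e3 0 + x 1 • e3 1 + x 2 • e3 2) = 0 := by
      rw [← vec_eq_sum, hB]
    simp only [map_add, map_smul, add_apply, smul_apply] at h1
    rw [← h1]
    module
  rw [Fin.sum_univ_three]
  simp only [rotJ_apply, map_sub, map_smul, sub_apply, smul_apply]
  simp [e3_coord]
  linear_combination (norm := module) hs • (B (e3 0) (e3 0) + B (e3 1) (e3 1) + B (e3 2) (e3 2)) - hBsum - (2:ℝ) • hDsum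

lemma sphLap_eq {u : E3 → E3} (hu : ContDiff ℝ (⊤ : ℕ∞) u) {x : E3} (hx : x ∈ S2) :
    sphLap u x = ∑ i, fderiv ℝ (fderiv ℝ (homExt u)) x (e3 i) (e3 i) := by
  refine Finset.sum_congr rfl fun i _ => ?_
  have := (homExt_fderiv_diff hu (S2_ne_zero hx)).hasFDerivAt.clm_apply (hasFDerivAt_const (e3 i) x)
  rw [this.fderiv]
  simp

lemma rot_fderiv {u w : E3 → E3} (hu : ContDiff ℝ (⊤ : ℕ∞) u) (hw : ContDiff ℝ (⊤ : ℕ∞) w)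
    (J : E3 →L[ℝ] E3) {x : E3} (hx : x ∈ S2) :
    fderiv ℝ (fun y => ⟪fderiv ℝ (homExt u) y (J y), homExt w y⟫) x (J x) =
      ⟪fderiv ℝ (homExt u) x (J x), fderiv ℝ (homExt w) x (J x)⟫ +
      ⟪fderiv ℝ (fderiv ℝ (homExt u)) x (J x) (J x) + fderiv ℝ (homExt u) x (J (J x)), w x⟫ := by
  have h1 := (homExt_fderiv_diff hu (S2_ne_zero hx)).hasFDerivAt.clm_apply (J.hasFDerivAt (x := x))
  have h2 := h1.inner ℝ (homExt_diff hw (S2_ne_zero hx)).hasFDerivAt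
  rw [h2.fderiv]
  simp [homExt_eq_s12 hx, add_comm]

lemma rot_contDiffOn {u w : E3 → E3} (hu : ContDiff ℝ (⊤ : ℕ∞) u) (hw : ContDiff ℝ (⊤ : ℕ∞) w)
    (J : E3 →L[ℝ] E3) :
    ContDiffOn ℝ 1 (fun y => ⟪fderiv ℝ (homExt u) y (J y), homExt w y⟫) {0}ᶜ := by
  refine ContDiffOn.inner ℝ ?_ ((homExt_contDiffOn hw).of_le (by exact_mod_cast le_top))
  exact (homExt_fderiv_contDiffOn hu).clm_apply J.contDiff.contDiffOn

/-- Integration by parts on the sphere. -/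
lemma integral_parts {u w : E3 → E3} (hu : ContDiff ℝ (⊤ : ℕ∞) u) (hw : ContDiff ℝ (⊤ : ℕ∞) w) :
    ∫ x, (crossD u w x + ⟪sphLap u x, w x⟫) ∂sphVol = 0 := by
  have hI : ∀ i j, Integrable (fun x => fderiv ℝ (fun y => ⟪fderiv ℝ (homExt u) y (rotJ i j y), homExt w y⟫) x (rotJ i j x)) sphVol := by
    intro i j
    apply sphVol_integrable
    have := ((rot_contDiffOn hu hw (rotJ i j)).continuousOn_fderiv_of_isOpen
      isOpen_compl_singleton le_rfl).mono (fun x (hx : x ∈ S2) => S2_ne_zero hx)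
    exact this.clm_apply (rotJ i j).continuous.continuousOn
  have h0 : ∀ i j, ∫ x, fderiv ℝ (fun y => ⟪fderiv ℝ (homExt u) y (rotJ i j y), homExt w y⟫) x (rotJ i j x) ∂sphVol = 0 :=
    fun i j => integral_rot_deriv _ (rotJ_skew i j) _ (rot_contDiffOn hu hw (rotJ i j))
  have h1 := integral_add ((hI 0 1).add (hI 0 2)) (hI 1 2)
  simp only [Pi.add_apply] at h1
  rw [integral_add (hI 0 1) (hI 0 2), h0, h0, h0] at h1
  simp only [add_zero] at h1
  rw [← h1]
  refine integral_congr_ae ?_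
  filter_upwards [ae_mem_S2] with x hx
  have hx0 := S2_ne_zero hx
  rw [rot_fderiv hu hw _ hx, rot_fderiv hu hw _ hx, rot_fderiv hu hw _ hx, sphLap_eq hu hx,
    ← sum_lap_rot (fderiv ℝ (homExt u) x) _ hx (homExt_euler hu hx0) (homExt_euler2 hu hx0), crossD,
    ← sum_inner_rot _ _ hx (homExt_euler hu hx0)]
  simp only [inner_add_left]
  ring

lemma sphVol_restrict : sphVol.restrict S2 = sphVol := by
  rw [sphVol, Measure.restrict_restrict measurable_S2, inter_self]

lemma energy_eq (u : E3 → E3) : energy u = (1 / 2) * ∫ x, enDensity u x ∂sphVol := by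
  rw [energy, energyOn, sphVol_restrict]

lemma crossD_self (u : E3 → E3) (x : E3) : crossD u u x = enDensity u x := by
  simp [crossD, enDensity]

lemma crossD_integrable {u w : E3 → E3} (hu : ContDiff ℝ (⊤ : ℕ∞) u)
    (hw : ContDiff ℝ (⊤ : ℕ∞) w) : Integrable (crossD u w) sphVol := by
  apply sphVol_integrable
  have h : ∀ {f : E3 → E3}, ContDiff ℝ (⊤ : ℕ∞) f → ContinuousOn (fderiv ℝ (homExt f)) S2 :=
    fun hf => (homExt_fderiv_contDiffOn hf).continuousOn.mono
      (fun x (hx : x ∈ S2) => S2_ne_zero hx)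
  exact continuousOn_finsetSum _ fun i _ =>
    ((h hu).clm_apply continuousOn_const).inner ((h hw).clm_apply continuousOn_const)

lemma enDensity_integrable {u : E3 → E3} (hu : ContDiff ℝ (⊤ : ℕ∞) u) :
    Integrable (enDensity u) sphVol := by
  have := crossD_integrable hu hu
  rwa [show crossD u u = enDensity u from funext (crossD_self u)] at this

lemma homExt_sub_fderiv {v w : E3 → E3} (hv : ContDiff ℝ (⊤ : ℕ∞) v)
    (hw : ContDiff ℝ (⊤ : ℕ∞) w) {x : E3} (hx : x ∈ S2) :
    fderiv ℝ (homExt fun y => v y - w y) x = fderiv ℝ (homExt v) x - fderiv ℝ (homExt w) x :=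
  fderiv_sub (homExt_diff hv (S2_ne_zero hx)) (homExt_diff hw (S2_ne_zero hx))

lemma enDensity_sub {v w : E3 → E3} (hv : ContDiff ℝ (⊤ : ℕ∞) v)
    (hw : ContDiff ℝ (⊤ : ℕ∞) w) {x : E3} (hx : x ∈ S2) :
    enDensity (fun y => v y - w y) x = enDensity v x + enDensity w x - 2 * crossD w v x := by
  simp only [enDensity, crossD, homExt_sub_fderiv hv hw hx, sub_apply, Finset.mul_sum,
    ← Finset.sum_add_distrib, ← Finset.sum_sub_distrib]
  refine Finset.sum_congr rfl fun i _ => ?_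
  rw [norm_sub_sq_real, real_inner_comm]
  ring

lemma crossD_sub {v w : E3 → E3} (hv : ContDiff ℝ (⊤ : ℕ∞) v)
    (hw : ContDiff ℝ (⊤ : ℕ∞) w) {x : E3} (hx : x ∈ S2) :
    crossD w (fun y => v y - w y) x = crossD w v x - enDensity w x := by
  rw [← crossD_self]
  simp only [crossD, homExt_sub_fderiv hv hw hx, sub_apply, ← Finset.sum_sub_distrib,
    inner_sub_right]

lemma cross_young (u w : E3 → E3) (x : E3) {δ : ℝ} (hδ : 0 < δ) :
    2 * crossD u w x ≤ δ * enDensity w x + δ⁻¹ * enDensity u x := by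
  simp only [enDensity, crossD, Finset.mul_sum, ← Finset.sum_add_distrib]
  refine Finset.sum_le_sum fun i _ => ?_
  set a := fderiv ℝ (homExt u) x (e3 i)
  set b := fderiv ℝ (homExt w) x (e3 i)
  have h1 := real_inner_le_norm a b
  have h2 : δ * ‖b‖ ^ 2 + δ⁻¹ * ‖a‖ ^ 2 - 2 * (‖a‖ * ‖b‖) = δ⁻¹ * (δ * ‖b‖ - ‖a‖) ^ 2 := by
    field_simp
    ring
  have h3 : 0 ≤ δ⁻¹ * (δ * ‖b‖ - ‖a‖) ^ 2 := by positivity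
  linarith

lemma cross_integral {v w : E3 → E3} (hv : IsSphereMap v) (hw : IsHarmonicSphereMap w) :
    ∫ x, (enDensity w x - 2 * crossD w v x) ∂sphVol =
      ∫ x, enDensity w x * ‖v x - w x‖ ^ 2 ∂sphVol - ∫ x, enDensity w x ∂sphVol := by
  have hd := enDensity_integrable hw.1.1
  have hc := crossD_integrable hw.1.1 hv.1
  have hp : ∫ x, (crossD w v x - enDensity w x + enDensity w x * ‖v x - w x‖ ^ 2 / 2) ∂sphVol = 0 := by
    rw [← integral_parts hw.1.1 (hv.1.sub hw.1.1)]
    refine integral_congr_ae ?_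
    filter_upwards [ae_mem_S2] with x hx
    have ht : sphLap w x = -(enDensity w x • w x) := eq_neg_of_add_eq_zero_left (hw.2 x hx)
    have h1 : crossD w (fun y => v y - w y) x = crossD w v x - enDensity w x := crossD_sub hv.1 hw.1.1 hx
    have nv := S2_norm (hv.2 x hx)
    have nw := S2_norm (hw.1.2 x hx)
    have h2 : ‖v x - w x‖ ^ 2 = 2 - 2 * ⟪w x, v x⟫ := by
      rw [norm_sub_sq_real, nv, nw, real_inner_comm]
      ring
    have h3 : ⟪w x, w x⟫ = 1 := by rw [real_inner_self_eq_norm_sq, nw]; norm_num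
    rw [h1, ht, h2, inner_neg_left, real_inner_smul_left, inner_sub_right, h3]
    ring
  have hq : Integrable (fun x => enDensity w x * ‖v x - w x‖ ^ 2) sphVol := by
    refine hd.mul_bdd (c := 4) ?_ ?_
    · have : Continuous fun x => ‖v x - w x‖ ^ 2 := by
        have := hv.1.continuous
        have := hw.1.1.continuous
        fun_prop
      exact this.aestronglyMeasurable
    · filter_upwards [ae_mem_S2] with x hx
      have nv := S2_norm (hv.2 x hx)
      have nw := S2_norm (hw.1.2 x hx)
      have := norm_sub_le (v x) (w x)
      rw [Real.norm_of_nonneg (by positivity)]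
      nlinarith [norm_nonneg (v x - w x)]
  have hcd : Integrable (fun x => crossD w v x - enDensity w x) sphVol := hc.sub hd
  rw [integral_add hcd (hq.div_const 2), integral_sub hc hd, integral_div] at hp
  rw [integral_sub hd (hc.const_mul 2), integral_const_mul]
  linarith

/-- Section 3.6: the weighted `L²` rigidity estimates for a collection of
harmonic maps imply the `H¹` rigidity estimate. -/
theorem statement12 (n : ℕ) (α A : ℝ) (hα : 1 ≤ α) (hA : 1 ≤ A) :
    ∃ C : ℝ, 0 < C ∧
      ∀ (v : E3 → E3) (ω : Fin n → E3 → E3) (δ : ℝ) (Ω : Fin n → Set E3),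
        IsSphereMap v → (∀ i, IsHarmonicSphereMap (ω i)) →
        δ ∈ Set.Ioo (0 : ℝ) (1 / 2) →
        energy v = (∑ i, energy (ω i)) + δ →
        (Set.univ : Set (Fin n)).PairwiseDisjoint Ω → (⋃ i, Ω i) = S2 →
        (∀ i, MeasurableSet (Ω i)) →
        energy v ≤ A → (∀ i, energy (ω i) ≤ A) →
        (∀ i, (∫ x, enDensity (ω i) x * ‖v x - ω i x‖ ^ 2 ∂sphVol)
            ≤ A * δ * (1 + |Real.log δ|)) →
        (∀ i, (∫ x in S2 \ Ω i, enDensity (ω i) x ∂sphVol) ≤ A * δ ^ (2 * α)) →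
        (∑ i, ∫ x in Ω i, enDensity (fun y => v y - ω i y) x ∂sphVol)
          ≤ C * δ * (1 + |Real.log δ|) := by
  refine ⟨2 + 4 * n * A, by positivity, ?_⟩
  intro v ω δ Ω hv hω hδ hE hdisj hcov hmeas hvA hωA hL hout
  obtain ⟨hδ0, hδ1⟩ := hδ
  have hsub : ∀ i, Ω i ⊆ S2 := fun i => hcov ▸ subset_iUnion Ω i
  have hiv := enDensity_integrable hv.1
  have hiω := fun i => enDensity_integrable (hω i).1.1
  have hic := fun i => crossD_integrable (hω i).1.1 hv.1
  set X : ℝ := 1 + |Real.log δ| with hX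
  have hX1 : 1 ≤ X := by rw [hX]; linarith [abs_nonneg (Real.log δ)]
  have hpow : δ⁻¹ * δ ^ (2 * α) ≤ δ := by
    have h1 : δ ^ (2 * α) ≤ δ ^ (2 : ℝ) :=
      Real.rpow_le_rpow_of_exponent_ge hδ0 (by linarith) (by linarith)
    rw [Real.rpow_two] at h1
    calc δ⁻¹ * δ ^ (2 * α) ≤ δ⁻¹ * δ ^ 2 := by gcongr
      _ = δ := by field_simp
  have hnn : ∀ (u : E3 → E3) x, 0 ≤ enDensity u x := fun u x =>
    Finset.sum_nonneg fun i _ => by positivity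
  have hEv : ∫ x, enDensity v x ∂sphVol = 2 * energy v := by rw [energy_eq]; ring
  have hEω : ∀ i, ∫ x, enDensity (ω i) x ∂sphVol = 2 * energy (ω i) := by
    intro i; rw [energy_eq]; ring
  have hterm : ∀ i, ∫ x in Ω i, enDensity (fun y => v y - ω i y) x ∂sphVol ≤
      ∫ x in Ω i, enDensity v x ∂sphVol - 2 * energy (ω i) + 4 * A * δ * X := by
    intro i
    have hqi : ∫ x, (enDensity (ω i) x - 2 * crossD (ω i) v x) ∂sphVol =
        ∫ x, enDensity (ω i) x * ‖v x - ω i x‖ ^ 2 ∂sphVol - ∫ x, enDensity (ω i) x ∂sphVol :=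
      cross_integral hv (hω i)
    have hint : Integrable (fun x => enDensity (ω i) x - 2 * crossD (ω i) v x) sphVol :=
      (hiω i).sub ((hic i).const_mul 2)
    have h1 : ∫ x in Ω i, enDensity (fun y => v y - ω i y) x ∂sphVol =
        ∫ x in Ω i, enDensity v x ∂sphVol
          + ∫ x in Ω i, (enDensity (ω i) x - 2 * crossD (ω i) v x) ∂sphVol := by
      rw [← integral_add hiv.integrableOn hint.integrableOn]
      refine setIntegral_congr_fun (hmeas i) fun x hx => ?_
      simp only [enDensity_sub hv.1 (hω i).1.1 (hsub i hx)]
      ring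
    have h2 : ∫ x in Ω i, (enDensity (ω i) x - 2 * crossD (ω i) v x) ∂sphVol
        + ∫ x in S2 \ Ω i, (enDensity (ω i) x - 2 * crossD (ω i) v x) ∂sphVol
        = ∫ x, (enDensity (ω i) x - 2 * crossD (ω i) v x) ∂sphVol := by
      rw [← setIntegral_union disjoint_sdiff_right (measurable_S2.diff (hmeas i))
        hint.integrableOn hint.integrableOn, union_sdiff_cancel (hsub i), sphVol_restrict]
    have h3 : -∫ x in S2 \ Ω i, (enDensity (ω i) x - 2 * crossD (ω i) v x) ∂sphVol ≤
        δ * ∫ x in S2 \ Ω i, enDensity v x ∂sphVol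
          + δ⁻¹ * ∫ x in S2 \ Ω i, enDensity (ω i) x ∂sphVol := by
      rw [← integral_neg, ← integral_const_mul, ← integral_const_mul,
        ← integral_add (hiv.integrableOn.const_mul _) ((hiω i).integrableOn.const_mul _)]
      refine integral_mono hint.integrableOn.neg
        ((hiv.integrableOn.const_mul _).add ((hiω i).integrableOn.const_mul _)) fun x => ?_
      have := cross_young (ω i) v x hδ0
      have := hnn (ω i) x
      simp only [Pi.add_apply]
      linarith
    have h4 : ∫ x in S2 \ Ω i, enDensity v x ∂sphVol ≤ 2 * A := by
      have := setIntegral_le_integral (s := S2 \ Ω i) hiv (Eventually.of_forall (hnn v))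
      linarith
    have h5 : δ * ∫ x in S2 \ Ω i, enDensity v x ∂sphVol ≤ δ * (2 * A) := by gcongr
    have h6 : δ⁻¹ * ∫ x in S2 \ Ω i, enDensity (ω i) x ∂sphVol ≤ A * δ := by
      calc _ ≤ δ⁻¹ * (A * δ ^ (2 * α)) := by gcongr; exact hout i
        _ = A * (δ⁻¹ * δ ^ (2 * α)) := by ring
        _ ≤ A * δ := by gcongr
    have h7 : A * δ ≤ A * δ * X := le_mul_of_one_le_right (by positivity) hX1
    have h8 := hL i
    have h9 := hEω i
    linarith
  have hsum : ∑ i, ∫ x in Ω i, enDensity v x ∂sphVol = 2 * energy v := by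
    rw [← hEv, ← sphVol_restrict, ← hcov, integral_iUnion_fintype hmeas
      (fun i j hij => hdisj (mem_univ i) (mem_univ j) hij) (fun i => ?_)]
    · rw [hcov, sphVol_restrict]
    · exact hiv.integrableOn
  calc _ ≤ ∑ i, (∫ x in Ω i, enDensity v x ∂sphVol - 2 * energy (ω i) + 4 * A * δ * X) :=
        Finset.sum_le_sum fun i _ => hterm i
    _ = 2 * energy v - 2 * ∑ i, energy (ω i) + n * (4 * A * δ * X) := by
        rw [Finset.sum_add_distrib, Finset.sum_sub_distrib, hsum, ← Finset.mul_sum]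
        simp
    _ = 2 * δ + n * (4 * A * δ * X) := by rw [hE]; ring
    _ ≤ 2 * (δ * X) + n * (4 * A * δ * X) := by
        gcongr
        exact le_mul_of_one_le_right hδ0.le hX1
    _ = (2 + 4 * n * A) * δ * X := by ring
end
end

section
/- There exist universal constants ε₀ > 0 and C₀ < ∞ such that for every ε ∈ (0,ε₀] and every smooth map γ : S¹ → S² ⊂ ℝ³ with ∫_{S¹} |γ'(θ)|² dθ ≤ ε there exists a smooth map w : [0,1]×S¹ → S² ⊂ ℝ³ with w(0,·) = γ, w(1,·) equal to a constant, whose energy satisfies (1/2)∫_{[0,1]×S¹} (|∂_s w|² + |∂_θ w|²) ds dθ ≤ C₀·ε and whose oscillation satisfies sup_{(s,θ),(s',θ')} |w(s,θ) − w(s',θ')| ≤ C₀·√ε. -/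
open MeasureTheory Metric Real Set Filter
open scoped RealInnerProductSpace

noncomputable section

lemma slice_fst {w : ℝ → ℝ → E3} (hw : ContDiff ℝ (⊤ : ℕ∞) (fun p : ℝ × ℝ => w p.1 p.2))
    (s θ : ℝ) : HasDerivAt (fun t => w t θ) (deriv (fun t => w t θ) s) s := by
  have h : Differentiable ℝ (fun p : ℝ × ℝ => w p.1 p.2) := hw.differentiable (by simp)
  have h2 : Differentiable ℝ (fun t : ℝ => (t, θ)) := by fun_prop
  exact (h.comp h2).differentiableAt.hasDerivAt

lemma slice_snd {w : ℝ → ℝ → E3} (hw : ContDiff ℝ (⊤ : ℕ∞) (fun p : ℝ × ℝ => w p.1 p.2))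
    (s θ : ℝ) : HasDerivAt (w s) (deriv (w s) θ) θ := by
  have h : Differentiable ℝ (fun p : ℝ × ℝ => w p.1 p.2) := hw.differentiable (by simp)
  have h2 : Differentiable ℝ (fun t : ℝ => (s, t)) := by fun_prop
  exact (h.comp h2).differentiableAt.hasDerivAt

/-- Comparison of derivatives from comparison of increments. -/
lemma deriv_norm_le_of_incr {f g : ℝ → E3} {f' g' : E3} {x C : ℝ}
    (hf : HasDerivAt f f' x) (hg : HasDerivAt g g' x)
    (h : ∀ y, ‖f y - f x‖ ≤ C * ‖g y - g x‖) : ‖f'‖ ≤ C * ‖g'‖ := by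
  rw [hasDerivAt_iff_tendsto_slope] at hf hg
  refine le_of_tendsto_of_tendsto' hf.norm (hg.norm.const_mul C) ?_
  intro y
  simp only [slope_def_module, norm_smul]
  calc ‖(y - x)⁻¹‖ * ‖f y - f x‖ ≤ ‖(y - x)⁻¹‖ * (C * ‖g y - g x‖) := by
        gcongr
        exact h y
    _ = _ := by ring

lemma normalize_lip {a b : E3} (ha : 1 / 2 ≤ ‖a‖) (hb : 1 / 2 ≤ ‖b‖) :
    ‖‖a‖⁻¹ • a - ‖b‖⁻¹ • b‖ ≤ 4 * ‖a - b‖ := by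
  have ha0 : 0 < ‖a‖ := by linarith
  have hb0 : 0 < ‖b‖ := by linarith
  have e : ‖a‖⁻¹ • a - ‖b‖⁻¹ • b = ‖a‖⁻¹ • ((a - b) + ((‖b‖ - ‖a‖) * ‖b‖⁻¹) • b) := by
    rw [smul_add, smul_sub, smul_smul]
    have : ‖a‖⁻¹ * ((‖b‖ - ‖a‖) * ‖b‖⁻¹) = ‖a‖⁻¹ - ‖b‖⁻¹ := by field_simp
    rw [this, sub_smul]
    abel
  rw [e, norm_smul]
  have h1 : ‖((‖b‖ - ‖a‖) * ‖b‖⁻¹) • b‖ ≤ ‖a - b‖ := by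
    rw [norm_smul, norm_mul, norm_inv, norm_norm, mul_assoc, inv_mul_cancel₀ hb0.ne', mul_one,
      norm_sub_rev a b]
    exact abs_norm_sub_norm_le b a
  have h2 : ‖‖a‖⁻¹‖ ≤ 2 := by
    rw [norm_inv, norm_norm]
    calc ‖a‖⁻¹ ≤ (1 / 2 : ℝ)⁻¹ := by gcongr
      _ = 2 := by norm_num
  calc _ ≤ 2 * (‖a - b‖ + ‖a - b‖) := by
        gcongr
        exact (norm_add_le _ _).trans (by gcongr)
    _ = _ := by ring

lemma loop_close {γ : ℝ → E3} {ε : ℝ} (hε : 0 < ε) (hγ : ContDiff ℝ (⊤ : ℕ∞) γ)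
    (hper : ∀ θ, γ (θ + 2 * π) = γ θ)
    (hE : (∫ θ in (0 : ℝ)..(2 * π), ‖deriv γ θ‖ ^ 2) ≤ ε) (θ : ℝ) :
    ‖γ 0 - γ θ‖ ≤ 4 * Real.sqrt ε := by
  obtain ⟨t, ht, hte⟩ := Function.Periodic.exists_mem_Ico₀ (f := γ) hper (by positivity) θ
  rw [hte]
  have hs : 0 < Real.sqrt ε := Real.sqrt_pos.2 hε
  have hss : Real.sqrt ε * Real.sqrt ε = ε := Real.mul_self_sqrt hε.le
  have hc : Continuous (deriv γ) := hγ.continuous_deriv (by simp)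
  have hFTC : ∫ x in (0 : ℝ)..t, deriv γ x = γ t - γ 0 :=
    intervalIntegral.integral_deriv_eq_sub
      (fun x _ => (hγ.differentiable (by simp)).differentiableAt) (hc.intervalIntegrable _ _)
  rw [norm_sub_rev, ← hFTC]
  set g : ℝ → ℝ := fun x => Real.sqrt ε / 2 + (2 * Real.sqrt ε)⁻¹ * ‖deriv γ x‖ ^ 2 with hg
  have hgc : Continuous g := by fun_prop
  have hle : ∀ x, ‖deriv γ x‖ ≤ g x := by
    intro x
    have : g x - ‖deriv γ x‖ = (2 * Real.sqrt ε)⁻¹ * (Real.sqrt ε - ‖deriv γ x‖) ^ 2 := by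
      simp only [hg]
      field_simp
      ring
    have h2 : 0 ≤ g x - ‖deriv γ x‖ := by rw [this]; positivity
    linarith
  have hI : ∫ x in (0 : ℝ)..(2 * π), g x ≤ 4 * Real.sqrt ε := by
    simp only [hg]
    rw [intervalIntegral.integral_add (by simp) ((by fun_prop : Continuous
      fun x => (2 * Real.sqrt ε)⁻¹ * ‖deriv γ x‖ ^ 2).intervalIntegrable _ _)]
    rw [intervalIntegral.integral_const, intervalIntegral.integral_const_mul]
    have : (2 * Real.sqrt ε)⁻¹ * (∫ θ in (0 : ℝ)..(2 * π), ‖deriv γ θ‖ ^ 2)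
        ≤ (2 * Real.sqrt ε)⁻¹ * ε := by gcongr
    have h3 : (2 * Real.sqrt ε)⁻¹ * ε = Real.sqrt ε / 2 := by
      field_simp
      nlinarith
    have := Real.pi_lt_d2
    simp only [smul_eq_mul]
    nlinarith
  calc ‖∫ x in (0 : ℝ)..t, deriv γ x‖ ≤ ∫ x in (0 : ℝ)..t, g x :=
        intervalIntegral.norm_integral_le_of_norm_le ht.1
          (Filter.Eventually.of_forall fun x _ => hle x) (hgc.intervalIntegrable _ _)
    _ ≤ ∫ x in (0 : ℝ)..(2 * π), g x :=
        intervalIntegral.integral_mono_interval le_rfl ht.1 ht.2.le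
          (Filter.Eventually.of_forall fun x => (norm_nonneg _).trans (hle x))
          (hgc.intervalIntegrable _ _)
    _ ≤ _ := hI

/-- a loop in `S²` with small angular energy can be contracted to a point
on a unit cylinder with energy of the same order and oscillation of order `√ε`. -/
theorem statement13 :
    ∃ ε₀ C₀ : ℝ, 0 < ε₀ ∧ 0 < C₀ ∧
      ∀ ε : ℝ, ε ∈ Set.Ioc 0 ε₀ →
      ∀ γ : ℝ → E3, ContDiff ℝ (⊤ : ℕ∞) γ → (∀ θ, γ (θ + 2 * π) = γ θ) → (∀ θ, γ θ ∈ S2) →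
        (∫ θ in (0 : ℝ)..(2 * π), ‖deriv γ θ‖ ^ 2) ≤ ε →
        ∃ w : ℝ → ℝ → E3,
          ContDiff ℝ (⊤ : ℕ∞) (fun p : ℝ × ℝ => w p.1 p.2) ∧
          (∀ s θ, w s (θ + 2 * π) = w s θ) ∧
          (∀ s θ, w s θ ∈ S2) ∧
          (∀ θ, w 0 θ = γ θ) ∧
          (∃ c : E3, ∀ θ, w 1 θ = c) ∧
          (1 / 2) * (∫ s in (0 : ℝ)..1, ∫ θ in (0 : ℝ)..(2 * π),
              (‖deriv (fun t => w t θ) s‖ ^ 2 + ‖deriv (w s) θ‖ ^ 2)) ≤ C₀ * ε ∧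
          (∀ s ∈ Set.Icc (0 : ℝ) 1, ∀ s' ∈ Set.Icc (0 : ℝ) 1, ∀ θ θ' : ℝ,
              ‖w s θ - w s' θ'‖ ≤ C₀ * Real.sqrt ε) := by
  obtain ⟨M, hM⟩ := (isCompact_Icc (a := (0 : ℝ)) (b := 1)).exists_bound_of_continuousOn
    (f := deriv Real.smoothTransition)
    ((Real.smoothTransition.contDiff (n := 1)).continuous_deriv le_rfl).continuousOn
  refine ⟨1 / 64, 1024 * M ^ 2 + 32, by norm_num, by positivity, ?_⟩
  intro ε hε γ hγ hper hS hE
  obtain ⟨hε0, hε1⟩ := hε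
  have hclose := loop_close hε0 hγ hper hE
  have hS' : ∀ θ, ‖γ θ‖ = 1 := fun θ => by simpa [S2] using hS θ
  have hs0 : 0 < Real.sqrt ε := Real.sqrt_pos.2 hε0
  have hss : Real.sqrt ε * Real.sqrt ε = ε := Real.mul_self_sqrt hε0.le
  have hs8 : Real.sqrt ε ≤ 1 / 8 := by nlinarith
  set χ : ℝ → ℝ := Real.smoothTransition with hχ
  have hχc : ContDiff ℝ (⊤ : ℕ∞) χ := Real.smoothTransition.contDiff
  have hχ0 : ∀ s, 0 ≤ χ s := Real.smoothTransition.nonneg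
  have hχ1 : ∀ s, χ s ≤ 1 := Real.smoothTransition.le_one
  set v : ℝ → ℝ → E3 := fun s θ => γ θ + χ s • (γ 0 - γ θ) with hv
  have hvc : ContDiff ℝ (⊤ : ℕ∞) (fun p : ℝ × ℝ => v p.1 p.2) := by
    simp only [hv]
    have h1 : ContDiff ℝ (⊤ : ℕ∞) (fun p : ℝ × ℝ => γ p.2) := hγ.comp contDiff_snd
    have h2 : ContDiff ℝ (⊤ : ℕ∞) (fun p : ℝ × ℝ => χ p.1) := hχc.comp contDiff_fst
    exact h1.add (h2.smul (contDiff_const.sub h1))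
  have hvn : ∀ s θ, 1 / 2 ≤ ‖v s θ‖ := by
    intro s θ
    have h1 : ‖χ s • (γ 0 - γ θ)‖ ≤ 1 / 2 := by
      rw [norm_smul, Real.norm_of_nonneg (hχ0 s)]
      have := hclose θ
      nlinarith [hχ0 s, hχ1 s, norm_nonneg (γ 0 - γ θ)]
    have h2 : ‖γ θ‖ ≤ ‖v s θ‖ + ‖χ s • (γ 0 - γ θ)‖ := by
      have := norm_sub_le (v s θ) (χ s • (γ 0 - γ θ))
      simpa [hv] using this
    rw [hS'] at h2
    linarith
  have hv0 : ∀ s θ, v s θ ≠ 0 := fun s θ h => by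
    have := hvn s θ
    rw [h, norm_zero] at this
    linarith
  set w : ℝ → ℝ → E3 := fun s θ => ‖v s θ‖⁻¹ • v s θ with hw
  have hwc : ContDiff ℝ (⊤ : ℕ∞) (fun p : ℝ × ℝ => w p.1 p.2) := by
    simp only [hw]
    exact ((hvc.norm ℝ (fun p => hv0 p.1 p.2)).inv
      (fun p => norm_ne_zero_iff.2 (hv0 p.1 p.2))).smul hvc
  have hlip : ∀ s θ s' θ', ‖w s θ - w s' θ'‖ ≤ 4 * ‖v s θ - v s' θ'‖ :=
    fun s θ s' θ' => normalize_lip (hvn s θ) (hvn s' θ')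
  have hγd : ∀ θ, HasDerivAt γ (deriv γ θ) θ :=
    fun θ => (hγ.differentiable (by simp)).differentiableAt.hasDerivAt
  have hχd : ∀ s, HasDerivAt χ (deriv χ s) s :=
    fun s => (hχc.differentiable (by simp)).differentiableAt.hasDerivAt
  have hds : ∀ s ∈ Set.Icc (0 : ℝ) 1, ∀ θ,
      ‖deriv (fun t => w t θ) s‖ ≤ 16 * M * Real.sqrt ε := by
    intro s hs θ
    have hd : HasDerivAt (fun t => w t θ) (deriv (fun t => w t θ) s) s := by
      exact slice_fst hwc s θ
    have hg : HasDerivAt (fun t => v t θ) (deriv χ s • (γ 0 - γ θ)) s :=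
      ((hχd s).smul_const (γ 0 - γ θ)).const_add (γ θ)
    have h := deriv_norm_le_of_incr hd hg (fun y => hlip y θ s θ)
    rw [norm_smul] at h
    have h2 : ‖deriv χ s‖ * ‖γ 0 - γ θ‖ ≤ M * (4 * Real.sqrt ε) :=
      mul_le_mul (hM s hs) (hclose θ) (norm_nonneg _) ((norm_nonneg _).trans (hM s hs))
    linarith
  have hdθ : ∀ s θ, ‖deriv (w s) θ‖ ≤ 4 * ‖deriv γ θ‖ := by
    intro s θ
    have hd : HasDerivAt (w s) (deriv (w s) θ) θ := by
      exact slice_snd hwc s θ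
    have hg : HasDerivAt (v s) (deriv γ θ + χ s • (0 - deriv γ θ)) θ :=
      (hγd θ).add (((hasDerivAt_const θ (γ 0)).sub (hγd θ)).const_smul (χ s))
    have h := deriv_norm_le_of_incr hd hg (fun y => hlip s y s θ)
    have h2 : deriv γ θ + χ s • (0 - deriv γ θ) = (1 - χ s) • deriv γ θ := by
      rw [sub_smul, zero_sub, smul_neg, one_smul, sub_eq_add_neg]
    rw [h2, norm_smul, Real.norm_of_nonneg (by linarith [hχ1 s])] at h
    nlinarith [hχ0 s, norm_nonneg (deriv γ θ), mul_nonneg (hχ0 s) (norm_nonneg (deriv γ θ))]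
  have hc : Continuous (deriv γ) := hγ.continuous_deriv (by simp)
  refine ⟨w, hwc, ?_, ?_, ?_, ⟨γ 0, ?_⟩, ?_, ?_⟩
  · intro s θ
    simp only [hw, hv, hper]
  · intro s θ
    simp only [S2, mem_sphere_iff_norm, sub_zero, hw, norm_smul, norm_inv, norm_norm]
    exact inv_mul_cancel₀ (norm_ne_zero_iff.2 (hv0 s θ))
  · intro θ
    simp [hw, hv, hχ, Real.smoothTransition.zero, hS']
  · intro θ
    simp [hw, hv, hχ, Real.smoothTransition.one, hS']
  · set K : ℝ := 2 * π * (16 * M * Real.sqrt ε) ^ 2 + 16 * ε with hK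
    have hin : ∀ s ∈ Set.Icc (0 : ℝ) 1, ‖∫ θ in (0 : ℝ)..(2 * π),
        (‖deriv (fun t => w t θ) s‖ ^ 2 + ‖deriv (w s) θ‖ ^ 2)‖ ≤ K := by
      intro s hs
      have hI : Continuous fun θ => (16 * M * Real.sqrt ε) ^ 2 + 16 * ‖deriv γ θ‖ ^ 2 := by
        fun_prop
      refine (intervalIntegral.norm_integral_le_of_norm_le (by positivity)
        (g := fun θ => (16 * M * Real.sqrt ε) ^ 2 + 16 * ‖deriv γ θ‖ ^ 2)
        (Filter.Eventually.of_forall fun θ _ => ?_) (hI.intervalIntegrable _ _)).trans ?_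
      · rw [Real.norm_of_nonneg (by positivity)]
        have h1 := pow_le_pow_left₀ (norm_nonneg _) (hds s hs θ) 2
        have h2 := pow_le_pow_left₀ (norm_nonneg _) (hdθ s θ) 2
        nlinarith
      · rw [intervalIntegral.integral_add (by simp) ((by fun_prop : Continuous
          fun x => 16 * ‖deriv γ x‖ ^ 2).intervalIntegrable _ _),
          intervalIntegral.integral_const, intervalIntegral.integral_const_mul]
        simp only [smul_eq_mul, sub_zero, hK]
        linarith
    have hout : ‖∫ s in (0 : ℝ)..1, ∫ θ in (0 : ℝ)..(2 * π),
        (‖deriv (fun t => w t θ) s‖ ^ 2 + ‖deriv (w s) θ‖ ^ 2)‖ ≤ K * |1 - 0| := by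
      refine intervalIntegral.norm_integral_le_of_norm_le_const fun s hs => hin s ?_
      rw [Set.uIoc_of_le zero_le_one] at hs
      exact ⟨hs.1.le, hs.2⟩
    have h1 := (le_abs_self _).trans hout
    have h2 : K = 2 * π * 256 * (M ^ 2 * ε) + 16 * ε := by
      rw [hK, mul_pow, mul_pow, Real.sq_sqrt hε0.le]
      ring
    rw [sub_zero, abs_one, mul_one, h2] at h1
    have h3 : π * (M ^ 2 * ε) ≤ 4 * (M ^ 2 * ε) :=
      mul_le_mul_of_nonneg_right Real.pi_le_four (by positivity)
    nlinarith
  · intro s _ s' _ θ θ'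
    have hvp : ∀ s θ, ‖v s θ - γ 0‖ ≤ 4 * Real.sqrt ε := by
      intro s θ
      have e : v s θ - γ 0 = (χ s - 1) • (γ 0 - γ θ) := by
        simp only [hv, sub_smul, one_smul]
        abel
      rw [e, norm_smul, Real.norm_of_nonpos (by linarith [hχ1 s])]
      nlinarith [hclose θ, hχ0 s, norm_nonneg (γ 0 - γ θ),
        mul_nonneg (hχ0 s) (norm_nonneg (γ 0 - γ θ))]
    have h1 := hlip s θ s' θ'
    have h2 : ‖v s θ - v s' θ'‖ ≤ ‖v s θ - γ 0‖ + ‖v s' θ' - γ 0‖ := by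
      rw [norm_sub_rev (v s' θ')]
      exact norm_sub_le_norm_sub_add_norm_sub _ _ _
    have h3 : 0 ≤ 1024 * M ^ 2 * Real.sqrt ε := by positivity
    nlinarith [hvp s θ, hvp s' θ']
end
end

section
/- There exists a universal constant c > 0 such that the following holds. For all unit vectors p, q ∈ ℝ³ and all vectors a₁, a₂, b₁, b₂ ∈ ℝ³ such that {a₁, a₂} is an orthonormal basis of the orthogonal complement p^⊥ = {x ∈ ℝ³ : ⟨x,p⟩ = 0} and b₁, b₂ ∈ q^⊥, one has (|a₁−b₁|² + |a₂−b₂|²)^{1/2} ≥ c·min(|p−q|, |p+q|). -/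
open scoped RealInnerProductSpace

noncomputable section

/-- Parseval for an orthonormal triple in `E3`. -/
theorem parseval_aux (p q a₁ a₂ : E3) (hp : ‖p‖ = 1) (hq : ‖q‖ = 1)
    (h1 : ⟪a₁, p⟫ = 0) (h2 : ⟪a₂, p⟫ = 0) (n1 : ‖a₁‖ = 1) (n2 : ‖a₂‖ = 1)
    (h12 : ⟪a₁, a₂⟫ = 0) : ⟪a₁, q⟫ ^ 2 + ⟪a₂, q⟫ ^ 2 + ⟪p, q⟫ ^ 2 = 1 := by
  have h1' : ⟪p, a₁⟫ = 0 := by rw [real_inner_comm]; exact h1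
  have h2' : ⟪p, a₂⟫ = 0 := by rw [real_inner_comm]; exact h2
  have h12' : ⟪a₂, a₁⟫ = 0 := by rw [real_inner_comm]; exact h12
  have ho : Orthonormal ℝ ![a₁, a₂, p] := by
    constructor
    · intro i
      fin_cases i <;> simp [hp, n1, n2]
    · intro i j hij
      fin_cases i <;> fin_cases j <;> simp_all
  have hc : Fintype.card (Fin 3) = Module.finrank ℝ E3 := by simp
  let b := (basisOfOrthonormalOfCardEqFinrank ho hc).toOrthonormalBasis (by
    rw [coe_basisOfOrthonormalOfCardEqFinrank]; exact ho)
  have hb : ⇑b = ![a₁, a₂, p] := by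
    simp [b]
  have := b.sum_sq_norm_inner_right q
  rw [hb, Fin.sum_univ_three] at this
  simpa [hq] using this

/-- Cauchy-Schwarz against a unit vector orthogonal to `b`. -/
theorem cs_aux (q a b : E3) (hq : ‖q‖ = 1) (hb : ⟪b, q⟫ = 0) :
    ⟪a, q⟫ ^ 2 ≤ ‖a - b‖ ^ 2 := by
  have h := abs_real_inner_le_norm (a - b) q
  rw [inner_sub_left, hb, sub_zero, hq, mul_one] at h
  exact sq_le_sq' (by linarith [neg_abs_le ⟪a, q⟫]) (le_trans (le_abs_self _) h)

/-- for orthonormal bases of tangent planes, the distance between the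
frames controls the distance between the base points in `ℂP¹` (antipodal points
identified). -/
theorem statement14 :
    ∃ c : ℝ, 0 < c ∧
      ∀ p q a₁ a₂ b₁ b₂ : E3,
        ‖p‖ = 1 → ‖q‖ = 1 →
        ⟪a₁, p⟫ = 0 → ⟪a₂, p⟫ = 0 → ‖a₁‖ = 1 → ‖a₂‖ = 1 → ⟪a₁, a₂⟫ = 0 →
        ⟪b₁, q⟫ = 0 → ⟪b₂, q⟫ = 0 →
        c * min ‖p - q‖ ‖p + q‖ ≤ Real.sqrt (‖a₁ - b₁‖ ^ 2 + ‖a₂ - b₂‖ ^ 2) := by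
  refine ⟨1 / 2, by norm_num, ?_⟩
  intro p q a₁ a₂ b₁ b₂ hp hq h1 h2 n1 n2 h12 hb1 hb2
  have hP := parseval_aux p q a₁ a₂ hp hq h1 h2 n1 n2 h12
  have c1 := cs_aux q a₁ b₁ hq hb1
  have c2 := cs_aux q a₂ b₂ hq hb2
  have e1 := norm_sub_sq_real p q
  have e2 := norm_add_sq_real p q
  rw [hp, hq] at e1 e2
  have ht := abs_real_inner_le_norm p q
  rw [hp, hq, mul_one, abs_le] at ht
  obtain ⟨t1, t2⟩ := ht
  apply Real.le_sqrt_of_sq_le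
  have m0 : 0 ≤ min ‖p - q‖ ‖p + q‖ := le_min (norm_nonneg _) (norm_nonneg _)
  rcases le_total 0 ⟪p, q⟫ with h | h
  · have := pow_le_pow_left₀ m0 (min_le_left ‖p - q‖ ‖p + q‖) 2
    nlinarith [mul_nonneg h (sub_nonneg.2 t2)]
  · have := pow_le_pow_left₀ m0 (min_le_right ‖p - q‖ ‖p + q‖) 2
    nlinarith [mul_nonneg (neg_nonneg.2 h) (by linarith : 0 ≤ 1 + ⟪p, q⟫)]
end
end

section
/- Let D ⊂ ℝ² be the open unit disc and let h : cl(D) → ℝⁿ be continuous on the closed disc, C¹ up to the boundary, with each component harmonic in D. Write ∂_r h and ∂_θ h for the radial (outward normal) and angular (tangential) derivatives of h on ∂D. Then: (i) ∫_{∂D} |∂_r h|² dS = ∫_{∂D} |∂_θ h|² dS; and (ii) ∫_D |∇h|² dx ≤ osc_{∂D}(h)·∫_{∂D} |∂_r h| dS ≤ √(2π)·osc_{∂D}(h)·(∫_{∂D} |∂_θ h|² dS)^{1/2}, where osc_{∂D}(h) := sup_{x,y∈∂D} |h(x)−h(y)|. -/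
open MeasureTheory Metric Real

noncomputable section

abbrev E2 : Type := EuclideanSpace ℝ (Fin 2)

def e2 (i : Fin 2) : E2 := EuclideanSpace.single i (1 : ℝ)

def pt2 (a b : ℝ) : E2 := (WithLp.equiv 2 (Fin 2 → ℝ)).symm ![a, b]

/-- Parametrisation of the boundary circle `∂D`. -/
def circ (θ : ℝ) : E2 := pt2 (Real.cos θ) (Real.sin θ)

/-- Unit tangent to the boundary circle `∂D`. -/
def circT (θ : ℝ) : E2 := pt2 (-Real.sin θ) (Real.cos θ)

/-- Oscillation of `h` over the boundary circle. -/
def oscBdry {n : ℕ} (h : E2 → EuclideanSpace ℝ (Fin n)) : ℝ :=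
  ⨆ x : Metric.sphere (0 : E2) 1, ⨆ y : Metric.sphere (0 : E2) 1, ‖h x - h y‖

structure DiscData {n : ℕ} (g p q : ℂ → EuclideanSpace ℝ (Fin n)) : Prop where
  cg : ContinuousOn g (closedBall 0 1)
  cp : ContinuousOn p (closedBall 0 1)
  cq : ContinuousOn q (closedBall 0 1)
  dg : ∀ z ∈ ball (0 : ℂ) 1, DifferentiableAt ℝ g z
  dp : ∀ z ∈ ball (0 : ℂ) 1, DifferentiableAt ℝ p z
  dq : ∀ z ∈ ball (0 : ℂ) 1, DifferentiableAt ℝ q z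
  g1 : ∀ z ∈ ball (0 : ℂ) 1, fderiv ℝ g z 1 = p z
  gI : ∀ z ∈ ball (0 : ℂ) 1, fderiv ℝ g z Complex.I = q z
  lap : ∀ z ∈ ball (0 : ℂ) 1, fderiv ℝ p z 1 + fderiv ℝ q z Complex.I = 0
  sym : ∀ z ∈ ball (0 : ℂ) 1, fderiv ℝ p z Complex.I = fderiv ℝ q z 1

def polz (r θ : ℝ) : ℂ := (r : ℂ) * (Real.cos θ + Real.sin θ * Complex.I)

lemma norm_polz (r θ : ℝ) : ‖polz r θ‖ = |r| := by
  have := Complex.norm_polarCoord_symm (r, θ)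
  rwa [Complex.polarCoord_symm_apply] at this

lemma circleMap_eq_polz (θ : ℝ) : circleMap 0 1 θ = polz 1 θ := by
  simp [circleMap, polz, Complex.exp_mul_I]

lemma continuous_polz : Continuous (fun x : ℝ × ℝ => polz x.1 x.2) := by
  unfold polz; fun_prop

lemma polz_mem {r : ℝ} (h0 : 0 ≤ r) (h1 : r ≤ 1) (θ : ℝ) : polz r θ ∈ closedBall (0 : ℂ) 1 := by
  rw [mem_closedBall_zero_iff, norm_polz, abs_of_nonneg h0]; exact h1

lemma polz_mem_ball {r : ℝ} (h0 : 0 ≤ r) (h1 : r < 1) (θ : ℝ) : polz r θ ∈ ball (0 : ℂ) 1 := by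
  rw [mem_ball_zero_iff, norm_polz, abs_of_nonneg h0]; exact h1

lemma clm_polz {V : Type*} [NormedAddCommGroup V] [NormedSpace ℝ V] (L : ℂ →L[ℝ] V) (a b : ℝ) :
    L ((a : ℂ) + b * Complex.I) = a • L 1 + b • L Complex.I := by
  rw [← map_smul, ← map_smul, ← map_add]; simp

namespace DiscData
variable {n : ℕ} {g p q : ℂ → EuclideanSpace ℝ (Fin n)}

lemma holo (H : DiscData g p q) (k : Fin n) :
    DiffContOnCl ℂ (fun z => z * ((p z k : ℂ) - Complex.I * (q z k : ℂ))) (ball (0 : ℂ) |1|) := by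
  rw [abs_one]
  have cpk : ContinuousOn (fun z => p z k) (closedBall 0 1) :=
    (EuclideanSpace.proj (𝕜 := ℝ) k).continuous.comp_continuousOn H.cp
  have cqk : ContinuousOn (fun z => q z k) (closedBall 0 1) :=
    (EuclideanSpace.proj (𝕜 := ℝ) k).continuous.comp_continuousOn H.cq
  have cc : ContinuousOn (fun z => z * ((p z k : ℂ) - Complex.I * (q z k : ℂ)))
      (closedBall 0 1) := by
    have h1 := Complex.continuous_ofReal.comp_continuousOn cpk
    have h2 := Complex.continuous_ofReal.comp_continuousOn cqk
    exact continuousOn_id.mul (h1.sub (continuousOn_const.mul h2))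
  refine ⟨?_, by rwa [closure_ball (0 : ℂ) one_ne_zero]⟩
  intro z hz
  refine DifferentiableAt.differentiableWithinAt (differentiableAt_id.mul ?_)
  have hp : HasFDerivAt (fun z => (p z k : ℂ))
      (Complex.ofRealCLM.comp ((EuclideanSpace.proj (𝕜 := ℝ) k).comp (fderiv ℝ p z))) z :=
    Complex.ofRealCLM.hasFDerivAt.comp z
      ((EuclideanSpace.proj (𝕜 := ℝ) k).hasFDerivAt.comp z (H.dp z hz).hasFDerivAt)
  have hq : HasFDerivAt (fun z => (q z k : ℂ))
      (Complex.ofRealCLM.comp ((EuclideanSpace.proj (𝕜 := ℝ) k).comp (fderiv ℝ q z))) z :=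
    Complex.ofRealCLM.hasFDerivAt.comp z
      ((EuclideanSpace.proj (𝕜 := ℝ) k).hasFDerivAt.comp z (H.dq z hz).hasFDerivAt)
  have hh := hp.sub (hq.const_mul Complex.I)
  refine differentiableAt_complex_iff_differentiableAt_real.2 ⟨hh.differentiableAt, ?_⟩
  have hf := hh.fderiv
  have e1 := congrArg (fun v => v k) (H.lap z hz)
  have e2 := congrArg (fun v => v k) (H.sym z hz)
  simp only [PiLp.add_apply, PiLp.zero_apply] at e1 e2
  have e1p : (fderiv ℝ p z 1) k = - (fderiv ℝ q z Complex.I) k := by linarith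
  change (fderiv ℝ ((fun z => (p z k : ℂ)) - fun z => Complex.I * (q z k : ℂ)) z) Complex.I
    = Complex.I • (fderiv ℝ ((fun z => (p z k : ℂ)) - fun z => Complex.I * (q z k : ℂ)) z) 1
  rw [hf]
  simp [e1p, e2]
  ring_nf
  simp
  try ring

lemma mean_zero (f : ℂ → ℂ) (hf : DiffContOnCl ℂ f (ball (0 : ℂ) |1|)) (h0 : f 0 = 0) :
    ∫ θ in (0:ℝ)..(2*π), (f (polz 1 θ)).re = 0 := by
  have h := hf.circleAverage
  rw [h0, Real.circleAverage_def] at h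
  have h2 : ∫ θ in (0:ℝ)..(2*π), f (circleMap 0 1 θ) = 0 := by
    rcases smul_eq_zero.1 h with h | h
    · exact absurd h (by positivity)
    · exact h
  simp only [circleMap_eq_polz] at h2
  have hc : Continuous (fun θ => f (polz 1 θ)) := by
    have : ContinuousOn f (closedBall 0 1) := by
      have := hf.continuousOn
      rwa [abs_one, closure_ball (0 : ℂ) one_ne_zero] at this
    refine this.comp_continuous ?_ (fun θ => polz_mem zero_le_one le_rfl θ)
    exact continuous_polz.comp (by fun_prop : Continuous fun θ : ℝ => ((1 : ℝ), θ))
  have h3 := Complex.reCLM.intervalIntegral_comp_comm (hc.intervalIntegrable 0 (2*π) (μ := volume))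
  simp only [Complex.reCLM_apply] at h3
  rw [h3, h2]; simp

lemma contp (H : DiscData g p q) : ContinuousOn (fun x : ℝ × ℝ => p (polz x.1 x.2))
    (Set.Icc 0 1 ×ˢ Set.univ) :=
  H.cp.comp continuous_polz.continuousOn (fun _ hx => polz_mem hx.1.1 hx.1.2 _)
lemma contq (H : DiscData g p q) : ContinuousOn (fun x : ℝ × ℝ => q (polz x.1 x.2))
    (Set.Icc 0 1 ×ˢ Set.univ) :=
  H.cq.comp continuous_polz.continuousOn (fun _ hx => polz_mem hx.1.1 hx.1.2 _)
lemma contg (H : DiscData g p q) : ContinuousOn (fun x : ℝ × ℝ => g (polz x.1 x.2))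
    (Set.Icc 0 1 ×ˢ Set.univ) :=
  H.cg.comp continuous_polz.continuousOn (fun _ hx => polz_mem hx.1.1 hx.1.2 _)

lemma bd {V : Type*} [TopologicalSpace V] {F : ℝ × ℝ → V}
    (hF : ContinuousOn F (Set.Icc 0 1 ×ˢ Set.univ)) : Continuous (fun θ => F (1, θ)) :=
  hF.comp_continuous (by fun_prop) (fun θ => ⟨⟨zero_le_one, le_rfl⟩, trivial⟩)

lemma contr (H : DiscData g p q) :
    Continuous (fun θ => Real.cos θ • p (polz 1 θ) + Real.sin θ • q (polz 1 θ)) := by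
  have h1 : Continuous fun θ => p (polz 1 θ) := bd H.contp
  have h2 : Continuous fun θ => q (polz 1 θ) := bd H.contq
  exact (Real.continuous_cos.smul h1).add (Real.continuous_sin.smul h2)

lemma contt (H : DiscData g p q) :
    Continuous (fun θ => -Real.sin θ • p (polz 1 θ) + Real.cos θ • q (polz 1 θ)) := by
  have h1 : Continuous fun θ => p (polz 1 θ) := bd H.contp
  have h2 : Continuous fun θ => q (polz 1 θ) := bd H.contq
  exact (Real.continuous_sin.neg.smul h1).add (Real.continuous_cos.smul h2)

lemma flux_zero (H : DiscData g p q) (c : EuclideanSpace ℝ (Fin n)) :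
    ∫ θ in (0:ℝ)..(2*π),
      inner ℝ c (Real.cos θ • p (polz 1 θ) + Real.sin θ • q (polz 1 θ)) = 0 := by
  have hk : ∀ k, ∫ θ in (0:ℝ)..(2*π), c k * ((polz 1 θ) * ((p (polz 1 θ) k : ℂ)
      - Complex.I * (q (polz 1 θ) k : ℂ))).re = 0 := fun k => by
    rw [intervalIntegral.integral_const_mul]
    rw [mean_zero (fun z => z * ((p z k : ℂ) - Complex.I * (q z k : ℂ))) (H.holo k) (by simp),
      mul_zero]
  refine Eq.trans ?_ (Finset.sum_eq_zero (fun k (_ : k ∈ Finset.univ) => hk k))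
  rw [← intervalIntegral.integral_finsetSum]
  · congr 1; ext θ
    rw [PiLp.inner_apply]
    refine Finset.sum_congr rfl (fun k _ => ?_)
    simp [polz, -Complex.ofReal_cos, -Complex.ofReal_sin]
    ring
  · intro k _
    have h1 : Continuous fun θ => p (polz 1 θ) := bd H.contp
    have h2 : Continuous fun θ => q (polz 1 θ) := bd H.contq
    have h3 : Continuous (fun θ => polz 1 θ) :=
      continuous_polz.comp (by fun_prop : Continuous fun θ : ℝ => ((1 : ℝ), θ))
    apply Continuous.intervalIntegrable
    have h1p : Continuous (fun θ => p (polz 1 θ) k) :=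
      (EuclideanSpace.proj (𝕜 := ℝ) k).continuous.comp h1
    have h2p : Continuous (fun θ => q (polz 1 θ) k) :=
      (EuclideanSpace.proj (𝕜 := ℝ) k).continuous.comp h2
    exact continuous_const.mul (Complex.continuous_re.comp (h3.mul ((Complex.continuous_ofReal.comp h1p).sub
      (continuous_const.mul (Complex.continuous_ofReal.comp h2p)))))

lemma rellich (H : DiscData g p q) :
    ∫ θ in (0:ℝ)..(2*π), ‖Real.cos θ • p (polz 1 θ) + Real.sin θ • q (polz 1 θ)‖ ^ 2
    = ∫ θ in (0:ℝ)..(2*π), ‖-Real.sin θ • p (polz 1 θ) + Real.cos θ • q (polz 1 θ)‖ ^ 2 := by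
  have hr : Continuous (fun θ => ‖Real.cos θ • p (polz 1 θ) + Real.sin θ • q (polz 1 θ)‖ ^ 2) :=
    H.contr.norm.pow 2
  have ht : Continuous (fun θ => ‖-Real.sin θ • p (polz 1 θ) + Real.cos θ • q (polz 1 θ)‖ ^ 2) :=
    H.contt.norm.pow 2
  rw [← sub_eq_zero, ← intervalIntegral.integral_sub
    (hr.intervalIntegrable _ _) (ht.intervalIntegrable _ _)]
  have hk : ∀ k, ∫ θ in (0:ℝ)..(2*π), (((polz 1 θ) * ((p (polz 1 θ) k : ℂ)
      - Complex.I * (q (polz 1 θ) k : ℂ)))^2).re = 0 := fun k => by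
    refine mean_zero (fun z => (z * ((p z k : ℂ) - Complex.I * (q z k : ℂ)))^2) ?_ (by simp)
    have h := H.holo k
    exact ⟨h.differentiableOn.pow 2, h.continuousOn.pow 2⟩
  refine Eq.trans ?_ (Finset.sum_eq_zero (fun k (_ : k ∈ Finset.univ) => hk k))
  rw [← intervalIntegral.integral_finsetSum]
  · congr 1; ext θ
    rw [EuclideanSpace.norm_sq_eq, EuclideanSpace.norm_sq_eq, ← Finset.sum_sub_distrib]
    refine Finset.sum_congr rfl (fun k _ => ?_)
    simp [polz, pow_two, -Complex.ofReal_cos, -Complex.ofReal_sin]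
    ring
  · intro k _
    have h1 : Continuous fun θ => p (polz 1 θ) := bd H.contp
    have h2 : Continuous fun θ => q (polz 1 θ) := bd H.contq
    have h3 : Continuous (fun θ => polz 1 θ) := continuous_polz.comp (by fun_prop : Continuous fun θ : ℝ => ((1 : ℝ), θ))
    apply Continuous.intervalIntegrable
    have h1p : Continuous (fun θ => p (polz 1 θ) k) := (EuclideanSpace.proj (𝕜 := ℝ) k).continuous.comp h1
    have h2p : Continuous (fun θ => q (polz 1 θ) k) := (EuclideanSpace.proj (𝕜 := ℝ) k).continuous.comp h2
    exact Complex.continuous_re.comp ((h3.mul ((Complex.continuous_ofReal.comp h1p).sub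
      (continuous_const.mul (Complex.continuous_ofReal.comp h2p)))).pow 2)

lemma green_div (H : DiscData g p q) (c : EuclideanSpace ℝ (Fin n)) {r : ℝ} (h0 : 0 < r)
    (h1 : r < 1) (θ : ℝ) :
    let P : ℝ × ℝ → ℝ := fun x => x.1 * inner ℝ (g (polz x.1 x.2) - c)
      (Real.cos x.2 • p (polz x.1 x.2) + Real.sin x.2 • q (polz x.1 x.2))
    let Q : ℝ × ℝ → ℝ := fun x => inner ℝ (g (polz x.1 x.2) - c)
      (-Real.sin x.2 • p (polz x.1 x.2) + Real.cos x.2 • q (polz x.1 x.2))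
    DifferentiableAt ℝ P (r, θ) ∧ DifferentiableAt ℝ Q (r, θ) ∧
    fderiv ℝ P (r, θ) (1, 0) + fderiv ℝ Q (r, θ) (0, 1) =
      r * (‖p (polz r θ)‖ ^ 2 + ‖q (polz r θ)‖ ^ 2) := by
  intro P Q
  have hz := polz_mem_ball h0.le h1 θ
  have dz : DifferentiableAt ℝ (fun x : ℝ × ℝ => polz x.1 x.2) (r, θ) := by
    unfold polz
    have hc : DifferentiableAt ℝ (fun x : ℝ × ℝ => ((Real.cos x.2 : ℝ) : ℂ)) (r, θ) :=
      Complex.ofRealCLM.differentiableAt.comp (r, θ)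
        (Real.differentiable_cos.differentiableAt.comp (r, θ) differentiableAt_snd)
    have hs : DifferentiableAt ℝ (fun x : ℝ × ℝ => ((Real.sin x.2 : ℝ) : ℂ)) (r, θ) :=
      Complex.ofRealCLM.differentiableAt.comp (r, θ)
        (Real.differentiable_sin.differentiableAt.comp (r, θ) differentiableAt_snd)
    have hr : DifferentiableAt ℝ (fun x : ℝ × ℝ => (x.1 : ℂ)) (r, θ) :=
      Complex.ofRealCLM.differentiableAt.comp (r, θ) differentiableAt_fst
    exact hr.mul (hc.add (hs.mul_const _))
  have dg : DifferentiableAt ℝ (fun x : ℝ × ℝ => g (polz x.1 x.2)) (r, θ) :=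
    DifferentiableAt.comp (g := g) (r, θ) (H.dg _ hz) dz
  have dp : DifferentiableAt ℝ (fun x : ℝ × ℝ => p (polz x.1 x.2)) (r, θ) :=
    DifferentiableAt.comp (g := p) (r, θ) (H.dp _ hz) dz
  have dq : DifferentiableAt ℝ (fun x : ℝ × ℝ => q (polz x.1 x.2)) (r, θ) :=
    DifferentiableAt.comp (g := q) (r, θ) (H.dq _ hz) dz
  have dcos : DifferentiableAt ℝ (fun x : ℝ × ℝ => Real.cos x.2) (r, θ) := by fun_prop
  have dsin : DifferentiableAt ℝ (fun x : ℝ × ℝ => Real.sin x.2) (r, θ) := by fun_prop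
  have dP : DifferentiableAt ℝ P (r, θ) :=
    differentiableAt_fst.mul ((dg.sub_const c).inner ℝ ((dcos.smul dp).add (dsin.smul dq)))
  have dQ : DifferentiableAt ℝ Q (r, θ) :=
    (dg.sub_const c).inner ℝ ((dsin.neg.smul dp).add (dcos.smul dq))
  refine ⟨dP, dQ, ?_⟩
  have hr : HasDerivAt (fun r : ℝ => polz r θ) (Real.cos θ + Real.sin θ * Complex.I) r := by
    have := (Complex.ofRealCLM.hasDerivAt (x := r)).mul_const
      ((Real.cos θ : ℂ) + Real.sin θ * Complex.I)
    rw [show ((Complex.ofRealCLM 1 : ℂ)) = 1 by simp, one_mul] at this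
    exact this
  have ht : HasDerivAt (fun θ : ℝ => polz r θ)
      (((-(r * Real.sin θ) : ℝ) : ℂ) + ((r * Real.cos θ : ℝ) : ℂ) * Complex.I) θ := by
    have := (((Real.hasDerivAt_cos θ).ofReal_comp).add
      (((Real.hasDerivAt_sin θ).ofReal_comp).mul_const Complex.I)).const_mul (r : ℂ)
    refine this.congr_deriv ?_
    push_cast; ring
  have e1 : HasDerivAt (fun r => P (r, θ)) (fderiv ℝ P (r, θ) (1, 0)) r :=
    HasFDerivAt.comp_hasDerivAt (l := P) r dP.hasFDerivAt
      ((hasDerivAt_id r).prodMk (hasDerivAt_const r θ))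
  have e2 : HasDerivAt (fun θ => Q (r, θ)) (fderiv ℝ Q (r, θ) (0, 1)) θ :=
    HasFDerivAt.comp_hasDerivAt (l := Q) θ dQ.hasFDerivAt
      ((hasDerivAt_const θ r).prodMk (hasDerivAt_id θ))
  have gr := (H.dg _ hz).hasFDerivAt.comp_hasDerivAt r hr
  have pr := (H.dp _ hz).hasFDerivAt.comp_hasDerivAt r hr
  have qr := (H.dq _ hz).hasFDerivAt.comp_hasDerivAt r hr
  have gt := (H.dg _ hz).hasFDerivAt.comp_hasDerivAt θ ht
  have pt := (H.dp _ hz).hasFDerivAt.comp_hasDerivAt θ ht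
  have qt := (H.dq _ hz).hasFDerivAt.comp_hasDerivAt θ ht
  rw [clm_polz] at gr pr qr gt pt qt
  have f1 := e1.unique ((hasDerivAt_id r).mul
    ((gr.sub_const c).inner ℝ ((pr.const_smul (Real.cos θ)).add (qr.const_smul (Real.sin θ)))))
  have f2 := e2.unique ((gt.sub_const c).inner ℝ
    (((Real.hasDerivAt_sin θ).neg.smul pt).add ((Real.hasDerivAt_cos θ).smul qt)))
  rw [f1, f2]
  have l1 : fderiv ℝ p (polz r θ) 1 = - fderiv ℝ q (polz r θ) Complex.I :=
    eq_neg_of_add_eq_zero_left (H.lap _ hz)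
  rw [H.g1 _ hz, H.gI _ hz, H.sym _ hz, l1, ← real_inner_self_eq_norm_sq,
    ← real_inner_self_eq_norm_sq]
  simp only [Function.comp_apply, id, inner_add_left, inner_add_right, inner_sub_left,
    inner_smul_left, inner_smul_right, inner_neg_right, smul_add, smul_neg, neg_smul,
    Pi.neg_apply, inner_neg_left, conj_trivial, smul_smul,
    real_inner_comm (p (polz r θ)) (q (polz r θ))]
  have hcs := Real.sin_sq_add_cos_sq θ
  have hs : Real.sin θ ^ 2 = 1 - Real.cos θ ^ 2 := by linarith
  ring_nf
  simp only [hs]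
  ring

lemma green_polar (H : DiscData g p q) (c : EuclideanSpace ℝ (Fin n)) :
    ∫ x in Set.Icc ((0 : ℝ), -π) ((1 : ℝ), π),
        x.1 * (‖p (polz x.1 x.2)‖ ^ 2 + ‖q (polz x.1 x.2)‖ ^ 2)
    = ∫ θ in (-π)..π, inner ℝ (g (polz 1 θ) - c)
        (Real.cos θ • p (polz 1 θ) + Real.sin θ • q (polz 1 θ)) := by
  have key := fun r h0 h1 θ => H.green_div c (r := r) h0 h1 θ
  set P : ℝ × ℝ → ℝ := fun x => x.1 * inner ℝ (g (polz x.1 x.2) - c)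
      (Real.cos x.2 • p (polz x.1 x.2) + Real.sin x.2 • q (polz x.1 x.2)) with hP
  set Q : ℝ × ℝ → ℝ := fun x => inner ℝ (g (polz x.1 x.2) - c)
      (-Real.sin x.2 • p (polz x.1 x.2) + Real.cos x.2 • q (polz x.1 x.2)) with hQ
  have sub : Set.Icc ((0 : ℝ), -π) ((1 : ℝ), π) ⊆ Set.Icc 0 1 ×ˢ Set.univ := by
    rintro ⟨a, b⟩ ⟨h, hh⟩
    exact ⟨⟨h.1, hh.1⟩, trivial⟩
  have cg := H.contg.mono sub
  have cp := H.contp.mono sub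
  have cq := H.contq.mono sub
  have cc : ContinuousOn (fun x : ℝ × ℝ => Real.cos x.2) (Set.Icc ((0 : ℝ), -π) ((1 : ℝ), π)) := by
    fun_prop
  have cs : ContinuousOn (fun x : ℝ × ℝ => Real.sin x.2) (Set.Icc ((0 : ℝ), -π) ((1 : ℝ), π)) := by
    fun_prop
  have cP : ContinuousOn P (Set.Icc ((0 : ℝ), -π) ((1 : ℝ), π)) :=
    continuousOn_fst.mul ((cg.sub continuousOn_const).inner ((cc.smul cp).add (cs.smul cq)))
  have cQ : ContinuousOn Q (Set.Icc ((0 : ℝ), -π) ((1 : ℝ), π)) :=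
    (cg.sub continuousOn_const).inner ((cs.neg.smul cp).add (cc.smul cq))
  have cF : ContinuousOn (fun x : ℝ × ℝ => x.1 * (‖p (polz x.1 x.2)‖ ^ 2 + ‖q (polz x.1 x.2)‖ ^ 2))
      (Set.Icc ((0 : ℝ), -π) ((1 : ℝ), π)) :=
    continuousOn_fst.mul ((cp.norm.pow 2).add (cq.norm.pow 2))
  have hae : (Set.Ioo (0 : ℝ) 1 ×ˢ Set.Ioo (-π) π : Set (ℝ × ℝ))
      =ᵐ[volume] Set.Icc ((0 : ℝ), -π) ((1 : ℝ), π) := by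
    rw [← Set.Icc_prod_Icc]
    exact Measure.set_prod_ae_eq Ioo_ae_eq_Icc Ioo_ae_eq_Icc
  have hm : MeasurableSet (Set.Ioo (0 : ℝ) 1 ×ˢ Set.Ioo (-π) π : Set (ℝ × ℝ)) :=
    measurableSet_Ioo.prod measurableSet_Ioo
  have hFi : IntegrableOn (fun x : ℝ × ℝ => x.1 * (‖p (polz x.1 x.2)‖ ^ 2 + ‖q (polz x.1 x.2)‖ ^ 2))
      (Set.Icc ((0 : ℝ), -π) ((1 : ℝ), π)) := cF.integrableOn_compact isCompact_Icc
  have heq : Set.EqOn (fun x => fderiv ℝ P x (1, 0) + fderiv ℝ Q x (0, 1))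
      (fun x : ℝ × ℝ => x.1 * (‖p (polz x.1 x.2)‖ ^ 2 + ‖q (polz x.1 x.2)‖ ^ 2))
      (Set.Ioo (0 : ℝ) 1 ×ˢ Set.Ioo (-π) π) := by
    rintro ⟨r, θ⟩ ⟨hr, -⟩
    exact (key r hr.1 hr.2 θ).2.2
  have hle : ((0 : ℝ), -π) ≤ ((1 : ℝ), π) := ⟨zero_le_one, by have := Real.pi_pos; simp; linarith⟩
  have hdiv := integral_divergence_prod_Icc_of_hasFDerivAt_off_countable_of_le P Q
    (fderiv ℝ P) (fderiv ℝ Q) ((0 : ℝ), -π) ((1 : ℝ), π) hle ∅ Set.countable_empty cP cQ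
    (fun x hx => (key x.1 hx.1.1.1 hx.1.1.2 x.2).1.hasFDerivAt)
    (fun x hx => (key x.1 hx.1.1.1 hx.1.1.2 x.2).2.1.hasFDerivAt)
    ((hFi.congr_set_ae hae).congr_fun heq.symm hm |>.congr_set_ae hae.symm)
  rw [← setIntegral_congr_set hae, ← setIntegral_congr_fun hm heq, setIntegral_congr_set hae, hdiv]
  simp [hP, hQ, polz]

lemma polz_periodic (r θ : ℝ) : polz r (θ + 2 * π) = polz r θ := by
  simp only [polz, Real.cos_add_two_pi, Real.sin_add_two_pi]

lemma green (H : DiscData g p q) (c : EuclideanSpace ℝ (Fin n)) :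
    ∫ z in ball (0 : ℂ) 1, (‖p z‖ ^ 2 + ‖q z‖ ^ 2)
    = ∫ θ in (0:ℝ)..(2*π), inner ℝ (g (polz 1 θ) - c)
        (Real.cos θ • p (polz 1 θ) + Real.sin θ • q (polz 1 θ)) := by
  have hper : Function.Periodic (fun θ => inner ℝ (g (polz 1 θ) - c)
        (Real.cos θ • p (polz 1 θ) + Real.sin θ • q (polz 1 θ))) (2*π) := by
    intro θ
    simp only [polz_periodic, Real.cos_add_two_pi, Real.sin_add_two_pi]
  have h1 := hper.intervalIntegral_add_eq (-π) 0
  rw [show -π + 2 * π = π by ring, zero_add] at h1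
  rw [← h1, ← H.green_polar c, ← integral_indicator measurableSet_ball,
    ← Complex.integral_comp_polarCoord_symm]
  have hae : (Set.Ioo (0 : ℝ) 1 ×ˢ Set.Ioo (-π) π : Set (ℝ × ℝ))
      =ᵐ[volume] Set.Icc ((0 : ℝ), -π) ((1 : ℝ), π) := by
    rw [← Set.Icc_prod_Icc]
    exact Measure.set_prod_ae_eq Ioo_ae_eq_Icc Ioo_ae_eq_Icc
  have hm : MeasurableSet (Set.Ioo (0 : ℝ) 1 ×ˢ Set.Ioo (-π) π : Set (ℝ × ℝ)) :=
    measurableSet_Ioo.prod measurableSet_Ioo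
  rw [← setIntegral_congr_set hae, ← integral_indicator hm,
    ← integral_indicator polarCoord.open_target.measurableSet]
  congr 1
  ext ⟨r, θ⟩
  have hz : Complex.polarCoord.symm (r, θ) = polz r θ := by
    rw [Complex.polarCoord_symm_apply]; rfl
  by_cases h : (r, θ) ∈ polarCoord.target
  · have hr : 0 < r := h.1
    have hθ : θ ∈ Set.Ioo (-π) π := h.2
    rw [Set.indicator_of_mem h, hz]
    by_cases hr1 : r < 1
    · rw [Set.indicator_of_mem (polz_mem_ball hr.le hr1 θ), Set.indicator_of_mem
        (show (r, θ) ∈ Set.Ioo (0 : ℝ) 1 ×ˢ Set.Ioo (-π) π from ⟨⟨hr, hr1⟩, hθ⟩)]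
      rfl
    · rw [Set.indicator_of_notMem, Set.indicator_of_notMem, smul_zero]
      · exact fun h => hr1 h.1.2
      · rw [mem_ball_zero_iff, norm_polz, abs_of_pos hr]; exact hr1
  · rw [Set.indicator_of_notMem h, Set.indicator_of_notMem]
    exact fun hh => h ⟨hh.1.1, hh.2⟩

lemma energy_le (H : DiscData g p q) (M : ℝ)
    (hM : ∀ θ, ‖g (polz 1 θ) - g (polz 1 0)‖ ≤ M) :
    ∫ z in ball (0 : ℂ) 1, (‖p z‖ ^ 2 + ‖q z‖ ^ 2)
    ≤ M * ∫ θ in (0:ℝ)..(2*π),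
        ‖Real.cos θ • p (polz 1 θ) + Real.sin θ • q (polz 1 θ)‖ := by
  have hg : Continuous fun θ => g (polz 1 θ) := bd H.contg
  rw [H.green (g (polz 1 0)), ← intervalIntegral.integral_const_mul]
  refine intervalIntegral.integral_mono_on (by positivity) ?_ ?_ ?_
  · exact ((hg.sub continuous_const).inner H.contr).intervalIntegrable _ _
  · exact (continuous_const.mul H.contr.norm).intervalIntegrable _ _
  · intro θ _
    exact (real_inner_le_norm _ _).trans (mul_le_mul_of_nonneg_right (hM θ) (norm_nonneg _))

end DiscData
def iot : ℂ ≃ₗᵢ[ℝ] E2 := Complex.orthonormalBasisOneI.repr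

lemma iot_one : iot 1 = e2 0 := by
  ext i; fin_cases i <;> simp [iot, e2]

lemma iot_I : iot Complex.I = e2 1 := by
  ext i; fin_cases i <;> simp [iot, e2]

lemma iot_polz (θ : ℝ) : iot (polz 1 θ) = circ θ := by
  ext i; fin_cases i <;>
    simp [iot, polz, circ, pt2, -Complex.ofReal_cos, -Complex.ofReal_sin]

lemma circ_eq (θ : ℝ) : circ θ = Real.cos θ • e2 0 + Real.sin θ • e2 1 := by
  ext i; fin_cases i <;> simp [circ, pt2, e2]

lemma circT_eq (θ : ℝ) : circT θ = -Real.sin θ • e2 0 + Real.cos θ • e2 1 := by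
  ext i; fin_cases i <;> simp [circT, pt2, e2]

lemma discData_of (n : ℕ) (h : E2 → EuclideanSpace ℝ (Fin n))
    (hC1 : ContDiffOn ℝ 1 h (Metric.closedBall 0 1))
    (hC2 : ContDiffOn ℝ 2 h (Metric.ball 0 1))
    (hharm : ∀ x ∈ Metric.ball (0 : E2) 1,
        (∑ i, fderiv ℝ (fun y => fderiv ℝ h y (e2 i)) x (e2 i)) = 0) :
    DiscData (fun z => h (iot z)) (fun z => fderivWithin ℝ h (closedBall 0 1) (iot z) (e2 0))
      (fun z => fderivWithin ℝ h (closedBall 0 1) (iot z) (e2 1)) := by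
  have hmaps : Set.MapsTo iot (closedBall (0 : ℂ) 1) (closedBall (0 : E2) 1) := fun z hz => by
    simpa using hz
  have hmb : ∀ z ∈ ball (0 : ℂ) 1, iot z ∈ ball (0 : E2) 1 := fun z hz => by
    simpa using hz
  have hu : UniqueDiffOn ℝ (closedBall (0 : E2) 1) :=
    uniqueDiffOn_convex (convex_closedBall _ _)
      ⟨0, ball_subset_interior_closedBall (by simp)⟩
  have hD : ContinuousOn (fderivWithin ℝ h (closedBall 0 1)) (closedBall (0 : E2) 1) :=
    hC1.continuousOn_fderivWithin hu le_rfl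
  have hDb : ∀ x ∈ ball (0 : E2) 1, fderivWithin ℝ h (closedBall 0 1) x = fderiv ℝ h x :=
    fun x hx => fderivWithin_of_mem_nhds
      (Filter.mem_of_superset (isOpen_ball.mem_nhds hx) ball_subset_closedBall)
  have hc : ∀ v, ContinuousOn (fun z => fderivWithin ℝ h (closedBall 0 1) (iot z) v)
      (closedBall (0 : ℂ) 1) := fun v =>
    (hD.comp iot.continuous.continuousOn hmaps).clm_apply continuousOn_const
  have hiot : ∀ z, HasFDerivAt iot (iot.toContinuousLinearEquiv : ℂ →L[ℝ] E2) z :=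
    fun z => iot.toContinuousLinearEquiv.hasFDerivAt
  have hat : ∀ x ∈ ball (0 : E2) 1, ContDiffAt ℝ 2 h x := fun x hx =>
    hC2.contDiffAt (isOpen_ball.mem_nhds hx)
  have hdd : ∀ x ∈ ball (0 : E2) 1, DifferentiableAt ℝ (fderiv ℝ h) x := fun x hx =>
    ((hat x hx).fderiv_right (m := 1) (by norm_num)).differentiableAt (by norm_num)
  have hv : ∀ v, ∀ x ∈ ball (0 : E2) 1, HasFDerivAt (fun y => fderiv ℝ h y v)
      ((fderiv ℝ (fderiv ℝ h) x).flip v) x := fun v x hx => by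
    have := (hdd x hx).hasFDerivAt.clm_apply (hasFDerivAt_const v x)
    simpa using this
  have hp : ∀ v, ∀ z ∈ ball (0 : ℂ) 1,
      HasFDerivAt (fun z => fderivWithin ℝ h (closedBall 0 1) (iot z) v)
      (((fderiv ℝ (fderiv ℝ h) (iot z)).flip v).comp
        (iot.toContinuousLinearEquiv : ℂ →L[ℝ] E2)) z := fun v z hz => by
    refine ((hv v _ (hmb z hz)).comp z (hiot z)).congr_of_eventuallyEq ?_
    filter_upwards [isOpen_ball.mem_nhds hz] with w hw
    simp [hDb _ (hmb w hw)]
  have hg : ∀ z ∈ ball (0 : ℂ) 1, HasFDerivAt (fun z => h (iot z))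
      ((fderiv ℝ h (iot z)).comp (iot.toContinuousLinearEquiv : ℂ →L[ℝ] E2)) z := fun z hz =>
    ((hat _ (hmb z hz)).differentiableAt (by norm_num)).hasFDerivAt.comp z (hiot z)
  have i1 : (iot.toContinuousLinearEquiv : ℂ →L[ℝ] E2) 1 = e2 0 := iot_one
  have iI : (iot.toContinuousLinearEquiv : ℂ →L[ℝ] E2) Complex.I = e2 1 := iot_I
  refine ⟨hC1.continuousOn.comp iot.continuous.continuousOn hmaps, hc _, hc _,
    fun z hz => (hg z hz).differentiableAt, fun z hz => (hp _ z hz).differentiableAt,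
    fun z hz => (hp _ z hz).differentiableAt, fun z hz => ?_, fun z hz => ?_, fun z hz => ?_,
    fun z hz => ?_⟩
  · rw [(hg z hz).fderiv, ContinuousLinearMap.comp_apply, i1, hDb _ (hmb z hz)]
  · rw [(hg z hz).fderiv, ContinuousLinearMap.comp_apply, iI, hDb _ (hmb z hz)]
  · rw [(hp _ z hz).fderiv, (hp _ z hz).fderiv, ContinuousLinearMap.comp_apply,
      ContinuousLinearMap.comp_apply, i1, iI]
    have := hharm _ (hmb z hz)
    rw [Fin.sum_univ_two, (hv _ _ (hmb z hz)).fderiv, (hv _ _ (hmb z hz)).fderiv] at this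
    exact this
  · rw [(hp _ z hz).fderiv, (hp _ z hz).fderiv, ContinuousLinearMap.comp_apply,
      ContinuousLinearMap.comp_apply, i1, iI, ContinuousLinearMap.flip_apply,
      ContinuousLinearMap.flip_apply]
    exact ((hat _ (hmb z hz)).isSymmSndFDerivAt (by simp)) _ _

lemma le_oscBdry {n : ℕ} (h : E2 → EuclideanSpace ℝ (Fin n))
    (hcont : ContinuousOn h (Metric.closedBall 0 1)) (x y : Metric.sphere (0 : E2) 1) :
    ‖h x - h y‖ ≤ oscBdry h := by
  obtain ⟨C, hC⟩ := (isCompact_closedBall (0 : E2) 1).exists_bound_of_continuousOn hcont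
  have hb : ∀ x y : Metric.sphere (0 : E2) 1, ‖h x - h y‖ ≤ C + C := fun x y =>
    (norm_sub_le _ _).trans (add_le_add (hC _ (sphere_subset_closedBall x.2))
      (hC _ (sphere_subset_closedBall y.2)))
  have : Nonempty (Metric.sphere (0 : E2) 1) := ⟨x⟩
  have h1 : ‖h x - h y‖ ≤ ⨆ y : Metric.sphere (0 : E2) 1, ‖h x - h y‖ :=
    le_ciSup (f := fun y : Metric.sphere (0 : E2) 1 => ‖h x - h y‖)
      ⟨C + C, by rintro _ ⟨y, rfl⟩; exact hb x y⟩ y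
  refine h1.trans (le_ciSup
    (f := fun x : Metric.sphere (0 : E2) 1 => ⨆ y : Metric.sphere (0 : E2) 1, ‖h x - h y‖)
    ⟨C + C, ?_⟩ x)
  rintro _ ⟨x, rfl⟩
  exact ciSup_le (fun y => hb x y)

lemma cs_circle (f : ℝ → ℝ) (hf : Continuous f) :
    ∫ θ in (0:ℝ)..(2*π), f θ ≤ Real.sqrt (2*π) * Real.sqrt (∫ θ in (0:ℝ)..(2*π), f θ ^ 2) := by
  set A := ∫ θ in (0:ℝ)..(2*π), f θ with hA
  have hpi := Real.pi_pos
  rw [← Real.sqrt_mul (by positivity)]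
  refine Real.le_sqrt_of_sq_le ?_
  have h0 : 0 ≤ ∫ θ in (0:ℝ)..(2*π), (2 * π * f θ - A) ^ 2 :=
    intervalIntegral.integral_nonneg (by positivity) (fun _ _ => sq_nonneg _)
  have h1 : ∫ θ in (0:ℝ)..(2*π), (2 * π * f θ - A) ^ 2
      = (2*π)^2 * (∫ θ in (0:ℝ)..(2*π), f θ ^ 2) - (2 * (2*π) * A) * A + (2*π) * A^2 := by
    have : ∀ θ, (2 * π * f θ - A) ^ 2 = (2*π)^2 * f θ ^ 2 - (2 * (2*π) * A) * f θ + A^2 :=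
      fun θ => by ring
    simp only [this]
    have c1 : Continuous fun θ => (2*π)^2 * f θ ^ 2 := continuous_const.mul (hf.pow 2)
    have c2 : Continuous fun θ => (2 * (2*π) * A) * f θ := continuous_const.mul hf
    have c3 : Continuous fun θ => (2*π)^2 * f θ ^ 2 - (2 * (2*π) * A) * f θ := c1.sub c2
    rw [intervalIntegral.integral_add (c3.intervalIntegrable _ _)
      (continuous_const.intervalIntegrable _ _),
      intervalIntegral.integral_sub (c1.intervalIntegrable _ _) (c2.intervalIntegrable _ _),
      intervalIntegral.integral_const_mul, intervalIntegral.integral_const_mul]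
    simp [← hA]
  rw [h1] at h0
  have : 0 ≤ (2*π) * ((2*π) * (∫ θ in (0:ℝ)..(2*π), f θ ^ 2) - A^2) := by linarith
  have := nonneg_of_mul_nonneg_right this (by positivity)
  linarith

/-- for a harmonic map of the unit disc, the boundary integrals of the
squared normal and tangential derivatives agree, and the Dirichlet energy is controlled by
the oscillation and the tangential derivative of the boundary values. -/
theorem statement15 (n : ℕ) (h : E2 → EuclideanSpace ℝ (Fin n))
    (hcont : ContinuousOn h (Metric.closedBall 0 1))
    (hC1 : ContDiffOn ℝ 1 h (Metric.closedBall 0 1))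
    (hC2 : ContDiffOn ℝ 2 h (Metric.ball 0 1))
    (hharm : ∀ x ∈ Metric.ball (0 : E2) 1,
        (∑ i, fderiv ℝ (fun y => fderiv ℝ h y (e2 i)) x (e2 i)) = 0) :
    -- (i)
    (∫ θ in (0 : ℝ)..(2 * π),
        ‖fderivWithin ℝ h (Metric.closedBall 0 1) (circ θ) (circ θ)‖ ^ 2)
      = (∫ θ in (0 : ℝ)..(2 * π),
          ‖fderivWithin ℝ h (Metric.closedBall 0 1) (circ θ) (circT θ)‖ ^ 2) ∧
    -- (ii), first inequality
    (∫ x in Metric.ball (0 : E2) 1, ∑ i, ‖fderiv ℝ h x (e2 i)‖ ^ 2)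
      ≤ oscBdry h * ∫ θ in (0 : ℝ)..(2 * π),
          ‖fderivWithin ℝ h (Metric.closedBall 0 1) (circ θ) (circ θ)‖ ∧
    -- (ii), second inequality
    oscBdry h * (∫ θ in (0 : ℝ)..(2 * π),
          ‖fderivWithin ℝ h (Metric.closedBall 0 1) (circ θ) (circ θ)‖)
      ≤ Real.sqrt (2 * π) * oscBdry h *
        Real.sqrt (∫ θ in (0 : ℝ)..(2 * π),
          ‖fderivWithin ℝ h (Metric.closedBall 0 1) (circ θ) (circT θ)‖ ^ 2) := by
  have H := discData_of n h hC1 hC2 hharm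
  have hr : ∀ θ, fderivWithin ℝ h (closedBall 0 1) (circ θ) (circ θ)
      = Real.cos θ • fderivWithin ℝ h (closedBall 0 1) (iot (polz 1 θ)) (e2 0)
        + Real.sin θ • fderivWithin ℝ h (closedBall 0 1) (iot (polz 1 θ)) (e2 1) := fun θ => by
    rw [iot_polz, ← map_smul, ← map_smul, ← map_add, ← circ_eq]
  have ht : ∀ θ, fderivWithin ℝ h (closedBall 0 1) (circ θ) (circT θ)
      = -Real.sin θ • fderivWithin ℝ h (closedBall 0 1) (iot (polz 1 θ)) (e2 0)
        + Real.cos θ • fderivWithin ℝ h (closedBall 0 1) (iot (polz 1 θ)) (e2 1) := fun θ => by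
    rw [iot_polz, ← map_smul, ← map_smul, ← map_add, ← circT_eq]
  have hsph : ∀ θ, iot (polz 1 θ) ∈ Metric.sphere (0 : E2) 1 := fun θ => by
    rw [mem_sphere_zero_iff_norm, iot.norm_map, norm_polz, abs_one]
  have hosc : 0 ≤ oscBdry h :=
    (norm_nonneg _).trans (le_oscBdry h hcont ⟨_, hsph 0⟩ ⟨_, hsph 0⟩)
  simp only [hr, ht]
  have hi := H.rellich
  refine ⟨hi, ?_, ?_⟩
  · refine le_trans (le_of_eq ?_) (H.energy_le (oscBdry h) (fun θ =>
      le_oscBdry h hcont ⟨_, hsph θ⟩ ⟨_, hsph 0⟩))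
    have hmp : MeasurePreserving iot := iot.measurePreserving
    have hpre : iot ⁻¹' (ball (0 : E2) 1) = ball (0 : ℂ) 1 := by
      ext z; simp
    have := hmp.setIntegral_preimage_emb iot.toHomeomorph.measurableEmbedding
      (fun x => ∑ i, ‖fderiv ℝ h x (e2 i)‖ ^ 2) (ball (0 : E2) 1)
    rw [← this, hpre]
    refine setIntegral_congr_fun measurableSet_ball (fun z hz => ?_)
    have hzp : iot z ∈ ball (0 : E2) 1 := by simpa using hz
    have hD : fderivWithin ℝ h (closedBall 0 1) (iot z) = fderiv ℝ h (iot z) :=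
      fderivWithin_of_mem_nhds
        (Filter.mem_of_superset (isOpen_ball.mem_nhds hzp) ball_subset_closedBall)
    simp only [Fin.sum_univ_two, hD]
  · rw [← hi, mul_comm (Real.sqrt (2 * π)), mul_assoc]
    exact mul_le_mul_of_nonneg_left (cs_circle _ H.contr.norm) hosc
end
end

section
/- Let π : ℂ → S² ⊂ ℝ³ be the inverse stereographic projection π(x₁+ix₂) = (2x₁/(1+|x|²), 2x₂/(1+|x|²), (1−|x|²)/(1+|x|²)). For every q ∈ ℝ³ and every r ∈ (0,1), the set of points x on the circle {x ∈ ℂ : |x| = r} at which |π(x) − q|_{ℝ³} ≥ |x| holds has one-dimensional (arclength) measure at least πr, i.e. it comprises at least half of the circle. -/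
open MeasureTheory Real

noncomputable section

def pt3 (a b c : ℝ) : E3 := (WithLp.equiv 2 (Fin 3 → ℝ)).symm ![a, b, c]

/-- The inverse stereographic projection `π : ℂ → S² ⊂ ℝ³`. -/
def stereoC (z : ℂ) : E3 :=
  pt3 (2 * z.re / (1 + Complex.normSq z)) (2 * z.im / (1 + Complex.normSq z))
    ((1 - Complex.normSq z) / (1 + Complex.normSq z))

theorem stereo_antipodal (r : ℝ) (hr : r ∈ Set.Ioo (0 : ℝ) 1) (q : E3) (θ : ℝ)
    (h : ‖stereoC ((r : ℂ) * Complex.exp (θ * Complex.I)) - q‖ < r) :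
    r ≤ ‖stereoC ((r : ℂ) * Complex.exp ((θ + π : ℝ) * Complex.I)) - q‖ := by
  obtain ⟨h0, h1⟩ := hr
  by_contra hc
  push Not at hc
  have hexp : (r : ℂ) * Complex.exp ((θ + π : ℝ) * Complex.I)
      = -((r : ℂ) * Complex.exp (θ * Complex.I)) := by
    push_cast
    rw [add_mul, Complex.exp_add, Complex.exp_pi_mul_I]
    ring
  rw [hexp] at hc
  set z : ℂ := (r : ℂ) * Complex.exp (θ * Complex.I) with hz
  have hn : Complex.normSq z = r ^ 2 := by
    rw [Complex.normSq_eq_norm_sq, hz, norm_mul, Complex.norm_exp_ofReal_mul_I]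
    simp
  have hri : z.re ^ 2 + z.im ^ 2 = r ^ 2 := by
    rw [← hn, Complex.normSq_apply]; ring
  have hd : ‖stereoC z - stereoC (-z)‖ < 2 * r := by
    have := norm_sub_le (stereoC z - q) (stereoC (-z) - q)
    rw [sub_sub_sub_cancel_right] at this
    linarith
  have hsq : ‖stereoC z - stereoC (-z)‖ ^ 2 = 16 * r ^ 2 / (1 + r ^ 2) ^ 2 := by
    rw [EuclideanSpace.norm_sq_eq, Fin.sum_univ_three]
    simp only [stereoC, pt3, Complex.normSq_neg, hn]
    simp
    rw [← hri]
    field_simp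
    ring
  have h2 : ‖stereoC z - stereoC (-z)‖ ^ 2 < (2 * r) ^ 2 := by
    gcongr
  rw [hsq, div_lt_iff₀ (by positivity)] at h2
  have h4 : r ^ 2 ≤ 1 := by nlinarith
  have h3 : (1 + r ^ 2) ^ 2 ≤ 4 := by nlinarith [sq_nonneg r]
  nlinarith [mul_le_mul_of_nonneg_left h3 (sq_nonneg (2 * r))]

/-- for every `q ∈ ℝ³` and `r ∈ (0,1)`, the set of points `x` on the
circle `|x| = r` with `|π(x) - q| ≥ |x|` has arclength measure at least `πr`, i.e. it
comprises at least half of the circle. -/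
theorem statement17 (q : E3) (r : ℝ) (hr : r ∈ Set.Ioo (0 : ℝ) 1) :
    π * r ≤ r * (volume {θ : ℝ | θ ∈ Set.Ico 0 (2 * π) ∧
        r ≤ ‖stereoC ((r : ℂ) * Complex.exp (θ * Complex.I)) - q‖}).toReal := by
  set A := {θ : ℝ | θ ∈ Set.Ico 0 (2 * π) ∧
        r ≤ ‖stereoC ((r : ℂ) * Complex.exp (θ * Complex.I)) - q‖} with hA
  have hπ := Real.pi_pos
  have hfin : volume A ≠ ⊤ := by
    refine ne_top_of_le_ne_top ?_ (measure_mono (t := Set.Ico 0 (2 * π)) fun x hx => hx.1)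
    rw [Real.volume_Ico]
    exact ENNReal.ofReal_ne_top
  have hcov : Set.Ico 0 π ⊆
      (A ∩ Set.Ico 0 π) ∪ (fun x => x + π) ⁻¹' (A \ Set.Ico 0 π) := by
    intro θ hθ
    obtain ⟨ha, hb⟩ := hθ
    by_cases h : r ≤ ‖stereoC ((r : ℂ) * Complex.exp (θ * Complex.I)) - q‖
    · exact Or.inl ⟨⟨⟨ha, by linarith⟩, h⟩, ha, hb⟩
    · refine Or.inr ⟨⟨⟨by linarith, by linarith⟩, ?_⟩, fun h' => ?_⟩
      · exact stereo_antipodal r hr q θ (not_le.mp h)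
      · have := h'.2
        linarith
  have hle : ENNReal.ofReal π ≤ volume A := by
    calc ENNReal.ofReal π = volume (Set.Ico 0 π) := by simp
      _ ≤ _ := measure_mono hcov
      _ ≤ _ := measure_union_le _ _
      _ = volume (A ∩ Set.Ico 0 π) + volume (A \ Set.Ico 0 π) := by
        rw [measure_preimage_add_right]
      _ = volume A := measure_inter_add_sdiff _ measurableSet_Ico
  have := (ENNReal.ofReal_le_iff_le_toReal hfin).mp hle
  rw [mul_comm]
  exact mul_le_mul_of_nonneg_left this hr.1.le
end
end
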